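/- For generic limit-periodic V : ℤ → ℝ (i.e., for every V in some dense Gδ subset of LP(ℤ,ℝ)), the spectrum of the discrete Schrödinger operator H_{λV^{[k]}} is a Cantor set of zero Hausdorff dimension for every λ ≠ 0 and every k ∈ ℕ. -/

import Mathlib

/-!
The spectrum of a bounded `H_W` is nonempty and compact, and `E` lies outside it exactly when
`H_W - E` is bounded below (`not_mem_spectrum_iff`). Two further facts are needed: the spectrum of
a limit-periodic operator has no isolated points, and generically it has Hausdorff dimension zero,
which also forces empty interior.

No isolated points (`spectrum_preperfect`). If `E` were isolated in the spectrum, `H_W - E` would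
be bounded below on the orthogonal complement of its kernel, whose dimension is at most two since
an eigenvector is determined by two consecutive values. A finitely supported approximate
eigenvector, translated by almost-periods of `W`, yields three orthogonal approximate eigenvectors,
and some nonzero combination of them is orthogonal to the kernel: a contradiction.

Dimension zero. Let `V` be periodic and fix `k`. Changing `V` at one site multiplies the transfer
matrix by a shear. Using two neighbouring sieve sites, one first makes the monodromy matrix either
hyperbolic or elliptic with finite order up to sign, and in the latter case a second perturbation
over a longer period makes it hyperbolic. So every energy outside a finite set (the Dirichlet
energies of the free block between two sieve sites) can be put in a gap by an arbitrarily small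
periodic perturbation (`gap_opening`), and by compactness finitely many perturbations suffice for
all couplings `1/N ≤ |λ| ≤ N` and all energies away from the finite set (`finite_gap_family`).
Concatenate these perturbations on stretches of length comparable to `i` into one periodic
potential. At each spectral energy there is a bounded solution, and it is exponentially small in
the middle of the stretches for which the energy lies in a gap; cutting there shows that the energy
is exponentially close to an eigenvalue of a finite box (`conc_spectrum`). The number of such
eigenvalues grows only linearly in `i`, so for large `i` the spectrum is covered by intervals with
`∑ |I|^(1/N) ≤ 1/N`; such covers persist under small perturbations of the potential
(`exists_good`). Baire's theorem over all `N` and `k` gives a dense Gδ set of potentials that have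
these covers for all large `N`, hence spectra of dimension zero (`dimH_zero_of_smallCover`).
-/
open Set MeasureTheory BoundedContinuousFunction

noncomputable section

/-- ℓ²(ℤ; ℝ). -/
abbrev Ell2 : Type := lp (fun _ : ℤ => ℝ) 2

/-- Spectrum of the discrete Schrödinger operator `H_W = Δ + W` on `ℓ²(ℤ)`:
`E` lies in the spectrum iff `H_W - E` is not a linear bijection of `ℓ²(ℤ)`
(for bounded `W`, by the open mapping theorem this is equivalent to `H_W - E`
not being boundedly invertible). -/
def SchrodingerSpectrum (W : ℤ → ℝ) : Set ℝ :=
  {E : ℝ | ¬ ∃ T : Ell2 ≃ₗ[ℝ] Ell2,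
      ∀ f : Ell2, ∀ n : ℤ,
        (T f) n = f (n - 1) + f (n + 1) + (W n - E) * f n}

/-- A Cantor set of zero Hausdorff dimension: nonempty, compact, without isolated
points, with empty interior, and of Hausdorff dimension zero. -/
def IsZeroDimCantor (s : Set ℝ) : Prop :=
  s.Nonempty ∧ IsCompact s ∧ Preperfect s ∧ interior s = ∅ ∧ dimH s = 0

/-- Periodic bounded sequences. -/
def IsPeriodicSeq {α : Type*} [PseudoMetricSpace α] (W : ℤ →ᵇ α) : Prop :=
  ∃ q : ℕ, 0 < q ∧ ∀ n : ℤ, W (n + q) = W n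

/-- The limit-periodic functions `ℤ → ℝ`: uniform limits of periodic functions. -/
def LPZ : Set (ℤ →ᵇ ℝ) := closure {W : ℤ →ᵇ ℝ | IsPeriodicSeq W}

/-- The `k`-fold sieve of `V`: insert `k-1` zeros between consecutive entries. -/
def sieve (V : ℤ → ℝ) (k : ℕ) : ℤ → ℝ :=
  fun n => if (k : ℤ) ∣ n then V (n / k) else 0

/-! ### Symmetric operators and lower bounds -/

section

open scoped InnerProductSpace

variable {H : Type*} [NormedAddCommGroup H] [InnerProductSpace ℝ H]

/-- `A` is bounded below by a positive constant. For symmetric `A` on a Hilbert space this is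
equivalent to bounded invertibility. -/
def LowerBdd (A : H →L[ℝ] H) : Prop := ∃ c > 0, ∀ f, c * ‖f‖ ≤ ‖A f‖

/-- Symmetry of a bounded operator with respect to the real inner product. -/
def SymmOp (A : H →L[ℝ] H) : Prop := ∀ f g, ⟪A f, g⟫_ℝ = ⟪f, A g⟫_ℝ

lemma LowerBdd.comp {A B : H →L[ℝ] H} (hA : LowerBdd A) (hB : LowerBdd B) :
    LowerBdd (A.comp B) := by
  obtain ⟨c, hc, h⟩ := hA
  obtain ⟨d, hd, h'⟩ := hB
  refine ⟨c * d, by positivity, fun f => ?_⟩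
  calc c * d * ‖f‖ = c * (d * ‖f‖) := by ring
    _ ≤ c * ‖B f‖ := by gcongr; exact h' f
    _ ≤ _ := h _

/-- A positive symmetric operator that is bounded below has a coercive quadratic form. With
`β > ‖B‖`, positivity of `B` at `f - β⁻¹ B f` gives `β⁻¹ ‖B f‖² ≤ ⟪B f, f⟫`. -/
lemma LowerBdd.form {B : H →L[ℝ] H} (hs : SymmOp B) (hp : ∀ f, 0 ≤ ⟪B f, f⟫_ℝ)
    (hb : LowerBdd B) : ∃ κ > 0, ∀ f, κ * ‖f‖ ^ 2 ≤ ⟪B f, f⟫_ℝ := by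
  obtain ⟨c, hc, h⟩ := hb
  set β := ‖B‖ + 1 with hβ
  have hβ0 : 0 < β := by positivity
  refine ⟨c ^ 2 / β, by positivity, fun f => ?_⟩
  have h1 := hp (f - (1 / β) • B f)
  have h2 : ⟪B (f - (1 / β) • B f), f - (1 / β) • B f⟫_ℝ
      = ⟪B f, f⟫_ℝ - 2 * (1 / β) * ‖B f‖ ^ 2 + (1 / β) ^ 2 * ⟪B (B f), B f⟫_ℝ := by
    simp only [map_sub, map_smul, inner_sub_left, inner_sub_right, real_inner_smul_left,
      real_inner_smul_right, hs (B f) f, real_inner_self_eq_norm_sq]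
    ring
  have h3 : ⟪B (B f), B f⟫_ℝ ≤ β * ‖B f‖ ^ 2 := by
    calc _ ≤ ‖B (B f)‖ * ‖B f‖ := real_inner_le_norm _ _
      _ ≤ (‖B‖ * ‖B f‖) * ‖B f‖ := by gcongr; exact B.le_opNorm _
      _ ≤ (β * ‖B f‖) * ‖B f‖ := by gcongr; linarith
      _ = _ := by ring
  have h4 : (1 / β) ^ 2 * ⟪B (B f), B f⟫_ℝ ≤ (1 / β) ^ 2 * (β * ‖B f‖ ^ 2) := by gcongr
  have h5 : (1 / β) ^ 2 * (β * ‖B f‖ ^ 2) = (1 / β) * ‖B f‖ ^ 2 := by field_simp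
  have h6 : (1 / β) * ‖B f‖ ^ 2 ≤ ⟪B f, f⟫_ℝ := by rw [h2] at h1; linarith
  refine le_trans ?_ h6
  have h7 : (c * ‖f‖) ^ 2 ≤ ‖B f‖ ^ 2 := by gcongr; exact h f
  calc c ^ 2 / β * ‖f‖ ^ 2 = (1 / β) * (c * ‖f‖) ^ 2 := by ring
    _ ≤ _ := by gcongr

/-- `A - s`. -/
def opSub (A : H →L[ℝ] H) (s : ℝ) : H →L[ℝ] H := A - s • ContinuousLinearMap.id ℝ H

@[simp] lemma opSub_apply (A : H →L[ℝ] H) (s : ℝ) (f : H) : opSub A s f = A f - s • f := rfl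

lemma SymmOp.opSub {A : H →L[ℝ] H} (hs : SymmOp A) (s : ℝ) : SymmOp (opSub A s) := by
  intro f g
  simp [inner_sub_left, inner_sub_right, real_inner_smul_left, real_inner_smul_right, hs f g]

/-- An approximate eigenvector forces a spectral point within its error. If `m ≤ ε` is the best
lower bound of `A`, then `A² - m²` is positive; were `A - m` and `A + m` both bounded below, it
would be coercive, contradicting the choice of `m`. -/
lemma exists_spec_near {A : H →L[ℝ] H} (hs : SymmOp A) {ε : ℝ} {f : H} (hf : f ≠ 0)
    (hle : ‖A f‖ ≤ ε * ‖f‖) : ∃ s, |s| ≤ ε ∧ ¬ LowerBdd (opSub A s) := by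
  have hfn : 0 < ‖f‖ := norm_pos_iff.2 hf
  set S : Set ℝ := {c | 0 ≤ c ∧ ∀ g, c * ‖g‖ ≤ ‖A g‖} with hS
  have hS0 : (0 : ℝ) ∈ S := ⟨le_rfl, fun g => by simp⟩
  have hSb : ∀ c ∈ S, c ≤ ε := fun c hc => by
    have := (hc.2 f).trans hle
    exact le_of_mul_le_mul_right this hfn
  -- the optimal lower bound of `A`
  set m := sSup S with hm
  have hm0 : 0 ≤ m := le_csSup ⟨ε, hSb⟩ hS0
  have hmε : m ≤ ε := csSup_le ⟨0, hS0⟩ hSb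
  have hmg : ∀ g, m * ‖g‖ ≤ ‖A g‖ := by
    intro g
    rcases eq_or_ne g 0 with rfl | hg
    · simp
    have hgn : 0 < ‖g‖ := norm_pos_iff.2 hg
    rw [← le_div_iff₀ hgn]
    exact csSup_le ⟨0, hS0⟩ fun c hc => (le_div_iff₀ hgn).2 (hc.2 g)
  by_contra! hcon
  have h1 := hcon m (by rw [abs_of_nonneg hm0]; exact hmε)
  have h2 := hcon (-m) (by rw [abs_neg, abs_of_nonneg hm0]; exact hmε)
  set B := (opSub A m).comp (opSub A (-m)) with hB
  have hBf : ∀ g, B g = A (A g) - m ^ 2 • g := fun g => by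
    simp only [hB, ContinuousLinearMap.comp_apply, opSub_apply, neg_smul, sub_neg_eq_add, map_add,
      map_smul, smul_sub, smul_smul, sq]
    module
  have hform : ∀ g, ⟪B g, g⟫_ℝ = ‖A g‖ ^ 2 - m ^ 2 * ‖g‖ ^ 2 := fun g => by
    rw [hBf, inner_sub_left, hs, real_inner_smul_left, real_inner_self_eq_norm_sq,
      real_inner_self_eq_norm_sq]
  have hBs : SymmOp B := fun g k => by
    simp only [hBf, inner_sub_left, inner_sub_right, real_inner_smul_left, real_inner_smul_right,
      hs (A g), hs g]
  have hpos : ∀ g, 0 ≤ ⟪B g, g⟫_ℝ := fun g => by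
    rw [hform, ← mul_pow, sub_nonneg]; gcongr; exact hmg g
  obtain ⟨κ, hκ, h⟩ := (h1.comp h2).form hBs hpos
  have hmem : Real.sqrt (m ^ 2 + κ) ∈ S := by
    refine ⟨Real.sqrt_nonneg _, fun g => ?_⟩
    apply le_of_sq_le_sq _ (norm_nonneg _)
    rw [mul_pow, Real.sq_sqrt (by positivity)]
    have := h g; rw [hform] at this; linarith
  have hle' := le_csSup ⟨ε, hSb⟩ hmem
  have : m < Real.sqrt (m ^ 2 + κ) := Real.lt_sqrt_of_sq_lt (by linarith)
  exact absurd hle' (not_le.2 this)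

/-- If `0` is isolated in the spectrum, with gap `r` on both sides, then `A² ≥ s₀` on the range of
`A` for every `s₀ < r²`. The form of `A⁴ - s₀ A²` is considered; if its infimum were a negative
number `-m`, then `A⁴ - s₀ A² + m` would factor through `A - s` with `0 < |s| < r`, hence be
coercive, contradicting the choice of `m`. -/
lemma gap_on_range {A : H →L[ℝ] H} (hs : SymmOp A) {r : ℝ} (hr : 0 < r)
    (hgap : ∀ s, 0 < |s| → |s| < r → LowerBdd (opSub A s)) {s₀ : ℝ} (h0 : 0 < s₀)
    (h0r : s₀ < r ^ 2) (f : H) : s₀ * ‖A f‖ ^ 2 ≤ ‖A (A f)‖ ^ 2 := by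
  by_contra! hneg
  have hf : f ≠ 0 := by rintro rfl; simp at hneg
  have hfn : 0 < ‖f‖ := norm_pos_iff.2 hf
  -- `-m` is the optimal lower bound of the form of `A⁴ - s₀ A²`
  set S : Set ℝ := {c | ∀ g, -(c * ‖g‖ ^ 2) ≤ ‖A (A g)‖ ^ 2 - s₀ * ‖A g‖ ^ 2} with hS
  have hSq : ∀ g, ‖A (A g) - (s₀ / 2) • g‖ ^ 2
      = ‖A (A g)‖ ^ 2 - s₀ * ‖A g‖ ^ 2 + s₀ ^ 2 / 4 * ‖g‖ ^ 2 := fun g => by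
    rw [norm_sub_sq_real, real_inner_smul_right, hs, real_inner_self_eq_norm_sq, norm_smul,
      mul_pow, Real.norm_eq_abs, sq_abs]; ring
  have hmem0 : s₀ ^ 2 / 4 ∈ S := fun g => by
    have := hSq g; nlinarith [sq_nonneg ‖A (A g) - (s₀ / 2) • g‖]
  have hpos : ∃ c₀ > 0, ∀ c ∈ S, c₀ ≤ c := by
    refine ⟨(s₀ * ‖A f‖ ^ 2 - ‖A (A f)‖ ^ 2) / ‖f‖ ^ 2, div_pos (by linarith) (by positivity), ?_⟩
    intro c hc
    rw [div_le_iff₀ (by positivity)]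
    have := hc f; linarith
  obtain ⟨c₀, hc₀, hlow⟩ := hpos
  set m := sInf S with hm
  have hbb : BddBelow S := ⟨c₀, hlow⟩
  have hm0 : 0 < m := hc₀.trans_le (le_csInf ⟨_, hmem0⟩ hlow)
  have hms : m ≤ s₀ ^ 2 / 4 := csInf_le hbb hmem0
  have hmg : ∀ g, -(m * ‖g‖ ^ 2) ≤ ‖A (A g)‖ ^ 2 - s₀ * ‖A g‖ ^ 2 := by
    intro g
    rcases eq_or_ne g 0 with rfl | hg
    · simp
    have hgn : 0 < ‖g‖ ^ 2 := by have := norm_pos_iff.2 hg; positivity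
    have : (s₀ * ‖A g‖ ^ 2 - ‖A (A g)‖ ^ 2) / ‖g‖ ^ 2 ≤ m :=
      le_csInf ⟨_, hmem0⟩ fun c hc => (div_le_iff₀ hgn).2 (by have := hc g; linarith)
    rw [div_le_iff₀ hgn] at this; linarith
  -- the two roots of `x² - s₀ x + m`
  set d := Real.sqrt (s₀ ^ 2 - 4 * m) with hd
  have hdsq : d ^ 2 = s₀ ^ 2 - 4 * m := Real.sq_sqrt (by linarith)
  have hd0 : 0 ≤ d := Real.sqrt_nonneg _
  have hds : d < s₀ := by nlinarith
  have key : ∀ a, 0 < a → a < s₀ →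
      LowerBdd ((opSub A (Real.sqrt a)).comp (opSub A (-Real.sqrt a))) := by
    intro a ha ha'
    have hp : 0 < Real.sqrt a := Real.sqrt_pos.2 ha
    have hl : Real.sqrt a < r := (Real.sqrt_lt' hr).2 (ha'.trans h0r)
    exact (hgap _ (by rwa [abs_of_pos hp]) (by rwa [abs_of_pos hp])).comp
      (hgap _ (by rwa [abs_neg, abs_of_pos hp]) (by rwa [abs_neg, abs_of_pos hp]))
  have kf : ∀ a, 0 < a → ∀ g,
      ((opSub A (Real.sqrt a)).comp (opSub A (-Real.sqrt a))) g = A (A g) - a • g := by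
    intro a ha g
    simp only [ContinuousLinearMap.comp_apply, opSub_apply, neg_smul, sub_neg_eq_add, map_add,
      map_smul, smul_sub, smul_smul, Real.mul_self_sqrt ha.le]
    module
  set a := (s₀ + d) / 2 with ha
  set b := (s₀ - d) / 2 with hb
  have ha0 : 0 < a := by linarith
  have hb0 : 0 < b := by linarith
  have hab : a * b = m := by rw [ha, hb]; nlinarith
  have hab' : a + b = s₀ := by rw [ha, hb]; ring
  set B := ((opSub A (Real.sqrt a)).comp (opSub A (-Real.sqrt a))).comp
    ((opSub A (Real.sqrt b)).comp (opSub A (-Real.sqrt b))) with hB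
  have hBB : LowerBdd B := (key a ha0 (by linarith)).comp (key b hb0 (by linarith))
  have hBf : ∀ g, B g = A (A (A (A g))) - s₀ • A (A g) + m • g := fun g => by
    rw [hB, ContinuousLinearMap.comp_apply, kf b hb0, kf a ha0, ← hab, ← hab']
    simp only [map_sub, map_smul, smul_sub, smul_smul, add_smul]
    abel
  have hform : ∀ g, ⟪B g, g⟫_ℝ = ‖A (A g)‖ ^ 2 - s₀ * ‖A g‖ ^ 2 + m * ‖g‖ ^ 2 := fun g => by
    rw [hBf, inner_add_left, inner_sub_left, real_inner_smul_left, real_inner_smul_left,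
      hs, hs, hs (A g) g, real_inner_self_eq_norm_sq, real_inner_self_eq_norm_sq,
      real_inner_self_eq_norm_sq]
  have hBs : SymmOp B := fun g k => by
    simp only [hBf, inner_sub_left, inner_sub_right, inner_add_left, inner_add_right,
      real_inner_smul_left, real_inner_smul_right, hs (A (A (A g))), hs (A (A g)), hs (A g), hs g]
  obtain ⟨κ, hκ, h⟩ := hBB.form hBs (fun g => by rw [hform]; linarith [hmg g])
  have : m - κ ∈ S := fun g => by have := h g; rw [hform] at this; linarith
  have := csInf_le hbb this
  linarith

/-- If `0` is isolated in the spectrum of `A`, then `A` is bounded below on the orthogonal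
complement of its kernel, because that complement is the closure of the range. -/
lemma gap_on_ker_orth [CompleteSpace H] {A : H →L[ℝ] H} (hs : SymmOp A) {r : ℝ} (hr : 0 < r)
    (hgap : ∀ s, 0 < |s| → |s| < r → LowerBdd (opSub A s)) {s₀ : ℝ} (h0 : 0 < s₀)
    (h0r : s₀ < r ^ 2) {h : H} (hh : h ∈ (LinearMap.ker (A : H →ₗ[ℝ] H))ᗮ) :
    s₀ * ‖h‖ ^ 2 ≤ ‖A h‖ ^ 2 := by
  have hle : (LinearMap.range (A : H →ₗ[ℝ] H))ᗮ ≤ LinearMap.ker (A : H →ₗ[ℝ] H) := by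
    intro g hg
    rw [Submodule.mem_orthogonal] at hg
    have : ⟪A (A g), g⟫_ℝ = 0 := hg _ ⟨A g, rfl⟩
    rw [hs, real_inner_self_eq_norm_sq] at this
    simpa using this
  have h1 : h ∈ (LinearMap.range (A : H →ₗ[ℝ] H))ᗮᗮ := Submodule.orthogonal_le hle hh
  rw [Submodule.orthogonal_orthogonal_eq_closure] at h1
  have hcl : IsClosed {h : H | s₀ * ‖h‖ ^ 2 ≤ ‖A h‖ ^ 2} :=
    isClosed_le (by fun_prop) (by fun_prop)
  refine closure_minimal ?_ hcl h1
  rintro _ ⟨f, rfl⟩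
  exact gap_on_range hs hr hgap h0 h0r f

end

/-! ### The Schrödinger operator on `ℓ²(ℤ)` -/

section

open scoped InnerProductSpace

lemma ell2_normsq (f : Ell2) : ‖f‖ ^ 2 = ∑' n, f n ^ 2 := by
  rw [← real_inner_self_eq_norm_sq, lp.inner_eq_tsum]
  simp [sq]

lemma ell2_summable (f : Ell2) : Summable fun n => f n ^ 2 := by
  have := lp.summable_inner (𝕜 := ℝ) f f
  simpa [sq] using this

lemma ell2_mem {f : ℤ → ℝ} (h : Summable fun n => f n ^ 2) : Memℓp f 2 := by
  apply memℓp_gen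
  simpa using h

/-- Translation `f ↦ f (· + a)` on `ℓ²(ℤ)`. -/
def shiftL (a : ℤ) : Ell2 →ₗᵢ[ℝ] Ell2 where
  toFun f := ⟨fun n => f (n + a), ell2_mem
    ((Equiv.addRight a).summable_iff.2 (ell2_summable f) : Summable fun n => f (n + a) ^ 2)⟩
  map_add' f g := rfl
  map_smul' c f := rfl
  norm_map' f := by
    rw [← sq_eq_sq₀ (norm_nonneg _) (norm_nonneg _), ell2_normsq, ell2_normsq]
    exact (Equiv.addRight a).tsum_eq (fun n => f n ^ 2)

@[simp] lemma shiftL_apply (a : ℤ) (f : Ell2) (n : ℤ) : shiftL a f n = f (n + a) := rfl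

lemma mul_sq_le {W : ℤ → ℝ} {C : ℝ} (hC : ∀ n, |W n| ≤ C) (f : ℤ → ℝ) (n : ℤ) :
    (W n * f n) ^ 2 ≤ C ^ 2 * f n ^ 2 := by
  rw [mul_pow, ← sq_abs (W n)]
  gcongr
  exact hC n

/-- Multiplication by the bounded sequence `W` on `ℓ²(ℤ)`. -/
def mulL (W : ℤ → ℝ) (C : ℝ) (hC : ∀ n, |W n| ≤ C) : Ell2 →L[ℝ] Ell2 :=
  LinearMap.mkContinuous
    { toFun f := ⟨fun n => W n * f n, ell2_mem (Summable.of_nonneg_of_le (fun n => sq_nonneg _)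
        (mul_sq_le hC f) ((ell2_summable f).mul_left _))⟩
      map_add' f g := by ext n; exact mul_add _ _ _
      map_smul' c f := by ext n; exact mul_left_comm _ _ _ } C (fun f => by
        have hC0 : 0 ≤ C := (abs_nonneg _).trans (hC 0)
        rw [← sq_le_sq₀ (norm_nonneg _) (by positivity), mul_pow, ell2_normsq, ell2_normsq,
          ← tsum_mul_left]
        exact Summable.tsum_le_tsum (mul_sq_le hC f) (ell2_summable _)
          ((ell2_summable f).mul_left _))

@[simp] lemma mulL_apply (W : ℤ → ℝ) (C : ℝ) (hC : ∀ n, |W n| ≤ C) (f : Ell2) (n : ℤ) :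
    mulL W C hC f n = W n * f n := rfl

lemma mulL_norm_le (W : ℤ → ℝ) (C : ℝ) (hC : ∀ n, |W n| ≤ C) (f : Ell2) :
    ‖mulL W C hC f‖ ≤ C * ‖f‖ :=
  (ContinuousLinearMap.le_opNorm _ _).trans (by
    gcongr
    exact LinearMap.mkContinuous_norm_le _ ((abs_nonneg _).trans (hC 0)) _)

/-- The discrete Schrödinger operator `H_W` as a bounded operator on `ℓ²(ℤ)`. -/
def schr (W : ℤ → ℝ) (C : ℝ) (hC : ∀ n, |W n| ≤ C) : Ell2 →L[ℝ] Ell2 :=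
  (shiftL (-1)).toContinuousLinearMap + (shiftL 1).toContinuousLinearMap + mulL W C hC

@[simp] lemma schr_apply (W : ℤ → ℝ) (C : ℝ) (hC : ∀ n, |W n| ≤ C) (f : Ell2) (n : ℤ) :
    schr W C hC f n = f (n - 1) + f (n + 1) + W n * f n := rfl

lemma shiftL_inner (a : ℤ) (f g : Ell2) : ⟪shiftL a f, g⟫_ℝ = ⟪f, shiftL (-a) g⟫_ℝ := by
  rw [lp.inner_eq_tsum, lp.inner_eq_tsum,
    ← (Equiv.addRight a).tsum_eq (fun n => ⟪f n, shiftL (-a) g n⟫_ℝ)]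
  simp

lemma schr_symm (W : ℤ → ℝ) (C : ℝ) (hC : ∀ n, |W n| ≤ C) : SymmOp (schr W C hC) := by
  intro f g
  have h1 := shiftL_inner 1 f g
  have h2 := shiftL_inner (-1) f g
  have h3 : ⟪mulL W C hC f, g⟫_ℝ = ⟪f, mulL W C hC g⟫_ℝ := by
    rw [lp.inner_eq_tsum, lp.inner_eq_tsum]
    refine tsum_congr fun n => ?_
    simp; ring
  rw [neg_neg] at h2
  simp only [schr, _root_.add_apply, inner_add_left, inner_add_right,
    LinearIsometry.coe_toContinuousLinearMap, h1, h2, h3]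
  ring

/-- For the bounded self-adjoint `H_W`, invertibility of `H_W - E` amounts to a lower bound. -/
lemma not_mem_spectrum_iff {W : ℤ → ℝ} {C : ℝ} (hC : ∀ n, |W n| ≤ C) (E : ℝ) :
    E ∉ SchrodingerSpectrum W ↔ LowerBdd (opSub (schr W C hC) E) := by
  set A := opSub (schr W C hC) E with hA
  have hs : SymmOp A := (schr_symm W C hC).opSub E
  have hAf : ∀ (f : Ell2) n, A f n = f (n - 1) + f (n + 1) + (W n - E) * f n := fun f n => by
    have : A f n = schr W C hC f n - E * f n := rfl
    rw [this, schr_apply]; ring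
  simp only [SchrodingerSpectrum, mem_ofPred_eq, not_not]
  constructor
  · rintro ⟨T, hT⟩
    have hTA : ∀ f, T f = A f := fun f => by
      ext n; rw [hT, hAf]
    have hinj : LinearMap.ker (A : Ell2 →ₗ[ℝ] Ell2) = ⊥ := by
      rw [LinearMap.ker_eq_bot]; intro f g h
      apply T.injective; rw [hTA, hTA]; exact h
    have hsurj : LinearMap.range (A : Ell2 →ₗ[ℝ] Ell2) = ⊤ := by
      rw [LinearMap.range_eq_top]; intro g
      exact ⟨T.symm g, by have := hTA (T.symm g); simpa using this.symm⟩
    set e := ContinuousLinearEquiv.ofBijective A hinj hsurj with he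
    set β := ‖(e.symm : Ell2 →L[ℝ] Ell2)‖ + 1 with hβ
    have hβ0 : 0 < β := by positivity
    refine ⟨1 / β, by positivity, fun f => ?_⟩
    have h1 : ‖f‖ ≤ β * ‖A f‖ := by
      have h2 := (e.symm : Ell2 →L[ℝ] Ell2).le_opNorm (A f)
      have h3 : e.symm (A f) = f := ContinuousLinearEquiv.ofBijective_symm_apply_apply A hinj hsurj f
      rw [ContinuousLinearEquiv.coe_coe, h3] at h2
      exact h2.trans (by gcongr; linarith)
    rw [one_div, inv_mul_le_iff₀ hβ0]; exact h1
  · rintro ⟨c, hc, h⟩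
    have hanti : AntilipschitzWith (Real.toNNReal c⁻¹) A :=
      A.antilipschitz_of_bound fun f => by
        rw [Real.coe_toNNReal _ (by positivity), ← div_eq_inv_mul, le_div_iff₀ hc, mul_comm]
        exact h f
    have hinj : Function.Injective A := hanti.injective
    have hclosed : IsClosed (LinearMap.range (A : Ell2 →ₗ[ℝ] Ell2) : Set Ell2) := by
      exact hanti.isClosed_range A.uniformContinuous
    have hsurj : LinearMap.range (A : Ell2 →ₗ[ℝ] Ell2) = ⊤ := by
      have : CompleteSpace (LinearMap.range (A : Ell2 →ₗ[ℝ] Ell2)) :=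
        hclosed.completeSpace_coe
      rw [← Submodule.orthogonal_eq_bot_iff, Submodule.eq_bot_iff]
      intro g hg
      rw [Submodule.mem_orthogonal] at hg
      have : ⟪A (A g), g⟫_ℝ = 0 := hg _ ⟨A g, rfl⟩
      rw [hs, real_inner_self_eq_norm_sq] at this
      have h0 : A g = 0 := by simpa using this
      exact hinj (by rw [h0, map_zero])
    refine ⟨LinearEquiv.ofBijective (A : Ell2 →ₗ[ℝ] Ell2) ⟨hinj, LinearMap.range_eq_top.1 hsurj⟩, ?_⟩
    intro f n
    exact hAf f n

lemma approx_of_not_lowerBdd {H : Type*} [NormedAddCommGroup H] [InnerProductSpace ℝ H]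
    {A : H →L[ℝ] H} (h : ¬ LowerBdd A) {c : ℝ} (hc : 0 < c) :
    ∃ f, f ≠ 0 ∧ ‖A f‖ < c * ‖f‖ := by
  simp only [LowerBdd, not_exists, not_and, not_forall, not_le] at h
  obtain ⟨f, hf⟩ := h c hc
  refine ⟨f, ?_, hf⟩
  rintro rfl
  simp at hf

lemma opSub_opSub {H : Type*} [NormedAddCommGroup H] [InnerProductSpace ℝ H]
    (A : H →L[ℝ] H) (s t : ℝ) : opSub (opSub A s) t = opSub A (s + t) := by
  ext f; simp [add_smul, sub_sub]

/-- An approximate eigenvector of `H_W` forces a spectral point within its error. -/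
lemma spectrum_near {W : ℤ → ℝ} {C : ℝ} (hC : ∀ n, |W n| ≤ C) {E ε : ℝ} {f : Ell2} (hf : f ≠ 0)
    (hle : ‖opSub (schr W C hC) E f‖ ≤ ε * ‖f‖) : ∃ E' ∈ SchrodingerSpectrum W, |E' - E| ≤ ε := by
  obtain ⟨s, hs, h⟩ := exists_spec_near ((schr_symm W C hC).opSub E) hf hle
  refine ⟨E + s, ?_, by simpa using hs⟩
  by_contra hn
  rw [not_mem_spectrum_iff hC] at hn
  rw [opSub_opSub] at h
  exact h hn

/-- The spectrum moves by at most the sup-norm of the change of the potential. The slack `δ`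
avoids a limiting argument. -/
lemma spectrum_perturb {W W' : ℤ → ℝ} {C C' d δ : ℝ} (hC : ∀ n, |W n| ≤ C)
    (hC' : ∀ n, |W' n| ≤ C') (hd : ∀ n, |W n - W' n| ≤ d) (hδ : 0 < δ) {E : ℝ}
    (hE : E ∈ SchrodingerSpectrum W') : ∃ E' ∈ SchrodingerSpectrum W, |E' - E| ≤ d + δ := by
  have h1 : ¬ LowerBdd (opSub (schr W' C' hC') E) := by
    rw [← not_mem_spectrum_iff hC']; exact not_not.2 hE
  obtain ⟨f, hf, hlt⟩ := approx_of_not_lowerBdd h1 hδ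
  refine spectrum_near hC hf ?_
  have : opSub (schr W C hC) E f = mulL (fun n => W n - W' n) d hd f
      + opSub (schr W' C' hC') E f := by
    ext n
    have e1 : opSub (schr W C hC) E f n = f (n - 1) + f (n + 1) + W n * f n - E * f n := rfl
    have e2 : (mulL (fun n => W n - W' n) d hd f + opSub (schr W' C' hC') E f) n
      = (W n - W' n) * f n + (f (n - 1) + f (n + 1) + W' n * f n - E * f n) := rfl
    rw [e1, e2]; ring
  rw [this, add_mul]
  exact (norm_add_le _ _).trans (add_le_add (mulL_norm_le _ _ _ _) hlt.le)

lemma spectrum_nonempty {W : ℤ → ℝ} {C : ℝ} (hC : ∀ n, |W n| ≤ C) :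
    (SchrodingerSpectrum W).Nonempty := by
  have hf : (lp.single 2 (0 : ℤ) (1 : ℝ) : Ell2) ≠ 0 := by
    intro h
    have := congrArg (fun f : Ell2 => f 0) h
    simp at this
  obtain ⟨E, hE, -⟩ := spectrum_near hC (E := 0) hf (ContinuousLinearMap.le_opNorm _ _)
  exact ⟨E, hE⟩

lemma spectrum_compact {W : ℤ → ℝ} {C : ℝ} (hC : ∀ n, |W n| ≤ C) :
    IsCompact (SchrodingerSpectrum W) := by
  apply Metric.isCompact_of_isClosed_isBounded
  · rw [← isOpen_compl_iff, Metric.isOpen_iff]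
    intro E hE
    rw [mem_compl_iff, not_mem_spectrum_iff hC] at hE
    obtain ⟨c, hc, h⟩ := hE
    refine ⟨c / 2, by positivity, fun E' hE' => ?_⟩
    rw [mem_compl_iff, not_mem_spectrum_iff hC]
    refine ⟨c / 2, by positivity, fun f => ?_⟩
    have h1 : opSub (schr W C hC) E f = opSub (schr W C hC) E' f + (E' - E) • f := by
      simp [sub_smul]
    have h2 := h f
    have h3 := norm_add_le (opSub (schr W C hC) E' f) ((E' - E) • f)
    rw [← h1, norm_smul] at h3
    have h4 : ‖E' - E‖ * ‖f‖ ≤ c / 2 * ‖f‖ := by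
      gcongr; rw [← dist_eq_norm]; exact (Metric.mem_ball.1 hE').le
    linarith
  · rw [isBounded_iff_forall_norm_le]
    refine ⟨‖schr W C hC‖, fun E hE => ?_⟩
    by_contra! hlt
    refine absurd hE ?_
    rw [not_mem_spectrum_iff hC]
    refine ⟨‖E‖ - ‖schr W C hC‖, by linarith, fun f => ?_⟩
    have h1 := norm_sub_norm_le (E • f) (schr W C hC f)
    rw [norm_smul, norm_sub_rev] at h1
    have h2 := (schr W C hC).le_opNorm f
    rw [opSub_apply]; linarith

end

/-! ### Limit-periodic potentials have no isolated spectral points -/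

section

open scoped InnerProductSpace

/-- Limit-periodicity, in the form of almost-invariance: up to `δ`, the sequence `W` is invariant
under translation by a subgroup `Pℤ`. -/
def LimPer (W : ℤ → ℝ) : Prop :=
  ∀ δ > 0, ∃ P : ℤ, 0 < P ∧ ∀ j n : ℤ, |W (n + j * P) - W n| ≤ δ

/-- Uniqueness for the initial value problem of the difference equation. -/
lemma solution_eq_zero {W : ℤ → ℝ} {E : ℝ} {f : ℤ → ℝ}
    (hf : ∀ n, f (n - 1) + f (n + 1) + (W n - E) * f n = 0) (h0 : f 0 = 0) (h1 : f 1 = 0) :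
    ∀ n, f n = 0 := by
  have key : ∀ n : ℤ, f n = 0 ∧ f (n + 1) = 0 := by
    intro n
    induction n using Int.induction_on with
    | zero => exact ⟨h0, by simpa using h1⟩
    | succ i ih =>
      refine ⟨ih.2, ?_⟩
      have := hf (i + 1)
      rw [add_sub_cancel_right, ih.1, ih.2] at this
      simpa using this
    | pred i ih =>
      have := hf (-i)
      rw [ih.1, ih.2] at this
      refine ⟨by simpa using this, by simpa using ih.1⟩
  exact fun n => (key n).1

/-- Approximate eigenvectors may be chosen with finite support. -/
lemma exists_finite_approx {A : Ell2 →L[ℝ] Ell2} {δ : ℝ} {f : Ell2} (h : ‖A f‖ < δ * ‖f‖) :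
    ∃ g : Ell2, ∃ M : ℤ, (∀ n, g n ≠ 0 → |n| ≤ M) ∧ ‖A g‖ < δ * ‖g‖ := by
  have hs := lp.hasSum_single (E := fun _ : ℤ => ℝ) (p := 2) (by simp) f
  have hopen : IsOpen {g : Ell2 | ‖A g‖ < δ * ‖g‖} := isOpen_lt (by fun_prop) (by fun_prop)
  have hev := hs.eventually (hopen.mem_nhds h)
  obtain ⟨s, hs⟩ := hev.exists
  refine ⟨_, ∑ i ∈ s, |i|, ?_, hs⟩
  intro n hn
  have hns : n ∈ s := by
    by_contra hns
    apply hn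
    rw [lp.coeFn_sum, Finset.sum_apply]
    refine Finset.sum_eq_zero fun i hi => ?_
    rw [lp.single_apply_ne]
    rintro rfl; exact hns hi
  exact Finset.single_le_sum (f := fun i : ℤ => |i|) (fun i _ => abs_nonneg i) hns

/-- If `E` were isolated, the approximate eigenvectors obtained by translating one of them by three
almost-periods would span a space too large for the at most two-dimensional kernel of `H_W - E`. -/
lemma spectrum_preperfect {W : ℤ → ℝ} {C : ℝ} (hC : ∀ n, |W n| ≤ C) (hW : LimPer W) :
    Preperfect (SchrodingerSpectrum W) := by
  intro E hE
  rw [accPt_iff_nhds]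
  by_contra! hcon
  obtain ⟨U, hU, hUE⟩ := hcon
  obtain ⟨r, hr, hrU⟩ := Metric.mem_nhds_iff.1 hU
  set A := opSub (schr W C hC) E with hA
  have hAf : ∀ (f : Ell2) n, A f n = f (n - 1) + f (n + 1) + (W n - E) * f n := fun f n => by
    have : A f n = schr W C hC f n - E * f n := rfl
    rw [this, schr_apply]; ring
  have hs : SymmOp A := (schr_symm W C hC).opSub E
  have hgap : ∀ s, 0 < |s| → |s| < r → LowerBdd (opSub A s) := by
    intro s hs0 hsr
    rw [hA, opSub_opSub, ← not_mem_spectrum_iff hC]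
    intro hmem
    have := hUE (E + s) ⟨hrU (by simpa using hsr), hmem⟩
    rw [abs_pos] at hs0
    exact hs0 (by linarith)
  have hnl : ¬ LowerBdd A := by
    rw [hA, ← not_mem_spectrum_iff hC]; exact not_not.2 hE
  -- a finitely supported approximate eigenvector and its translates
  obtain ⟨f, hf, hlt⟩ := approx_of_not_lowerBdd hnl (c := r / 16) (by positivity)
  obtain ⟨F, M, hM, hF⟩ := exists_finite_approx hlt
  have hF0 : F ≠ 0 := by rintro rfl; simp at hF
  obtain ⟨P, hP, hPW⟩ := hW (r / 16) (by positivity)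
  have hM0 : 0 ≤ M := by
    by_contra hneg
    apply hF0
    ext n
    by_contra hn
    have := hM n hn
    have := abs_nonneg n
    omega
  set τ : ℤ := (2 * M + 1) * P with hτ
  have hτM : 2 * M < τ := by nlinarith
  set g : Fin 3 → Ell2 := fun j => shiftL (-(j : ℤ) * τ) F with hg
  have hgA : ∀ j, ‖A (g j)‖ ≤ r / 8 * ‖F‖ := by
    intro j
    have hd : ∀ n, |W n - W (n + -(j : ℤ) * τ)| ≤ r / 16 := fun n => by
      have := hPW (-(j : ℤ) * (2 * M + 1)) n
      rw [abs_sub_comm, hτ, ← mul_assoc]; exact this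
    have : A (g j) = shiftL (-(j : ℤ) * τ) (A F)
        + mulL (fun n => W n - W (n + -(j : ℤ) * τ)) (r / 16) hd (g j) := by
      ext n
      have e : (shiftL (-(j : ℤ) * τ) (A F)
        + mulL (fun n => W n - W (n + -(j : ℤ) * τ)) (r / 16) hd (g j)) n
        = A F (n + -(j : ℤ) * τ) + (W n - W (n + -(j : ℤ) * τ)) * F (n + -(j : ℤ) * τ) := rfl
      rw [e, hAf, hAf, hg]
      simp only [shiftL_apply]
      rw [show n - 1 + -(j : ℤ) * τ = n + -(j : ℤ) * τ - 1 by ring,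
        show n + 1 + -(j : ℤ) * τ = n + -(j : ℤ) * τ + 1 by ring]
      ring
    rw [this]
    refine (norm_add_le _ _).trans ?_
    have h1 := mulL_norm_le _ _ hd (g j)
    have h2 : ‖g j‖ = ‖F‖ := (shiftL _).norm_map F
    rw [h2] at h1
    rw [(shiftL _).norm_map]
    linarith
  -- a combination orthogonal to the at most two-dimensional kernel of `A`
  set K := LinearMap.ker (A : Ell2 →ₗ[ℝ] Ell2) with hK
  have hKc : IsClosed (K : Set Ell2) := ContinuousLinearMap.isClosed_ker A
  have : CompleteSpace K := hKc.completeSpace_coe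
  set G : (Fin 3 → ℝ) →ₗ[ℝ] Ell2 := Fintype.linearCombination ℝ g with hG
  set ev : ℤ → Ell2 →ₗ[ℝ] ℝ := fun n =>
    { toFun := fun f => f n, map_add' := fun _ _ => rfl, map_smul' := fun _ _ => rfl } with hev
  set Ψ : (Fin 3 → ℝ) →ₗ[ℝ] ℝ × ℝ :=
    (LinearMap.prod (ev 0) (ev 1)) ∘ₗ (K.starProjection : Ell2 →ₗ[ℝ] Ell2) ∘ₗ G with hΨ
  have hker : LinearMap.ker Ψ ≠ ⊥ := LinearMap.ker_ne_bot_of_finrank_lt (by simp)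
  obtain ⟨c, hc, hc0⟩ := Submodule.exists_mem_ne_zero_of_ne_bot hker
  have hproj : K.starProjection (G c) = 0 := by
    have hmem : K.starProjection (G c) ∈ K := K.starProjection_apply_mem _
    have hz : A (K.starProjection (G c)) = 0 := hmem
    have hc' : Ψ c = 0 := hc
    have e0 : (K.starProjection (G c) : Ell2) 0 = 0 := congrArg Prod.fst hc'
    have e1 : (K.starProjection (G c) : Ell2) 1 = 0 := congrArg Prod.snd hc'
    ext n
    refine solution_eq_zero (W := W) (E := E) (fun n => ?_) e0 e1 n
    rw [← hAf, hz]; rfl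
  have horth : G c ∈ Kᗮ := (Submodule.starProjection_apply_eq_zero_iff K).1 hproj
  have hlow := gap_on_ker_orth hs hr hgap (s₀ := r ^ 2 / 4) (by positivity)
    (by nlinarith [sq_pos_of_pos hr]) horth
  have hGc : G c = ∑ j, c j • g j := Fintype.linearCombination_apply _ _ _
  have hcn : 0 < ∑ j, c j ^ 2 := by
    have : ∃ j, c j ≠ 0 := by
      by_contra! h; exact hc0 (funext h)
    obtain ⟨j, hj⟩ := this
    exact Finset.sum_pos' (fun i _ => sq_nonneg _) ⟨j, Finset.mem_univ _, by positivity⟩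
  -- the translates have disjoint supports, because `τ > 2 M`
  have horthog : ∀ i j, i ≠ j → ⟪g i, g j⟫_ℝ = 0 := by
    intro i j hij
    rw [lp.inner_eq_tsum]
    convert tsum_zero with n
    have : g i n = 0 ∨ g j n = 0 := by
      by_contra! hh
      have h1 := abs_le.1 (hM _ hh.1)
      have h2 := abs_le.1 (hM _ hh.2)
      have hij' : (i : ℤ) ≠ j := fun h => hij (Fin.ext (by exact_mod_cast h))
      rcases lt_or_gt_of_ne hij' with h | h
      · nlinarith
      · nlinarith
    rcases this with h | h <;> simp [h]
  have hnorm : ‖G c‖ ^ 2 = (∑ j, c j ^ 2) * ‖F‖ ^ 2 := by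
    rw [hGc, ← real_inner_self_eq_norm_sq, sum_inner, Finset.sum_mul]
    refine Finset.sum_congr rfl fun i _ => ?_
    rw [inner_sum, Finset.sum_eq_single i]
    · rw [real_inner_smul_left, real_inner_smul_right, real_inner_self_eq_norm_sq,
        show ‖g i‖ = ‖F‖ from (shiftL _).norm_map F]; ring
    · intro j _ hj
      rw [real_inner_smul_left, real_inner_smul_right, horthog i j hj.symm]; simp
    · simp
  have hup : ‖A (G c)‖ ≤ (∑ j, |c j|) * (r / 8 * ‖F‖) := by
    rw [hGc, map_sum, Finset.sum_mul]
    refine (norm_sum_le _ _).trans (Finset.sum_le_sum fun j _ => ?_)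
    rw [map_smul, norm_smul, Real.norm_eq_abs]
    gcongr; exact hgA j
  have hcs : (∑ j, |c j|) ^ 2 ≤ 3 * ∑ j, c j ^ 2 := by
    have := sq_sum_le_card_mul_sum_sq (s := Finset.univ) (f := fun j => |c j|)
    simpa using this
  have hup2 : ‖A (G c)‖ ^ 2 ≤ 3 * (∑ j, c j ^ 2) * (r / 8 * ‖F‖) ^ 2 := by
    calc ‖A (G c)‖ ^ 2 ≤ ((∑ j, |c j|) * (r / 8 * ‖F‖)) ^ 2 := by gcongr
      _ = (∑ j, |c j|) ^ 2 * (r / 8 * ‖F‖) ^ 2 := by ring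
      _ ≤ _ := by gcongr
  rw [hnorm] at hlow
  have hFn : 0 < ‖F‖ := norm_pos_iff.2 hF0
  have hpos : 0 < (∑ j, c j ^ 2) * ‖F‖ ^ 2 * r ^ 2 := by positivity
  nlinarith

end

/-! ### Transfer matrices -/

/-- One-step transfer matrix at energy `E` and potential value `v`. -/
def stepM (E v : ℝ) : Matrix (Fin 2) (Fin 2) ℝ := !![E - v, -1; 1, 0]

/-- Transfer matrix of `H_W` at energy `E` across the sites `n, …, n + j - 1`; it acts on the
vectors `(f n, f (n - 1))`. -/
def trM (E : ℝ) (W : ℤ → ℝ) (n : ℤ) : ℕ → Matrix (Fin 2) (Fin 2) ℝ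
  | 0 => 1
  | j + 1 => stepM E (W (n + j)) * trM E W n j

/-- `f` solves `H_W f = E f` at the site `n`. -/
def SolAt (W : ℤ → ℝ) (E : ℝ) (f : ℤ → ℝ) (n : ℤ) : Prop :=
  f (n - 1) + f (n + 1) + (W n - E) * f n = 0

/-- Discriminant of a `p`-periodic potential. -/
def disc (E : ℝ) (W : ℤ → ℝ) (p : ℕ) : ℝ := (trM E W 0 p).trace

@[simp] lemma stepM_det (E v : ℝ) : (stepM E v).det = 1 := by simp [stepM, Matrix.det_fin_two]

@[simp] lemma trM_det (E : ℝ) (W : ℤ → ℝ) (n : ℤ) (j : ℕ) : (trM E W n j).det = 1 := by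
  induction j with
  | zero => simp [trM]
  | succ j ih => rw [trM, Matrix.det_mul, ih, stepM_det, one_mul]

lemma trM_add (E : ℝ) (W : ℤ → ℝ) (n : ℤ) (i j : ℕ) :
    trM E W n (i + j) = trM E W (n + i) j * trM E W n i := by
  induction j with
  | zero => simp [trM]
  | succ j ih =>
    rw [← add_assoc, trM, trM, ih, Matrix.mul_assoc]
    push_cast; rw [add_assoc]

lemma trM_congr (E : ℝ) {W W' : ℤ → ℝ} {n n' : ℤ} {j : ℕ}
    (h : ∀ i : ℕ, i < j → W (n + i) = W' (n' + i)) : trM E W n j = trM E W' n' j := by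
  induction j with
  | zero => rfl
  | succ j ih => rw [trM, trM, ih fun i hi => h i (by omega), h j (by omega)]

lemma trM_per (E : ℝ) {W : ℤ → ℝ} {p : ℕ} (hW : ∀ n, W (n + p) = W n) (n : ℤ) (j : ℕ) :
    trM E W (n + p) j = trM E W n j :=
  trM_congr E fun i _ => by rw [add_right_comm, hW]

lemma trM_trace_succ (E : ℝ) {W : ℤ → ℝ} {p : ℕ} (hW : ∀ n, W (n + p) = W n) (n : ℤ) :
    (trM E W (n + 1) p).trace = (trM E W n p).trace := by
  have h1 : trM E W (n + 1) p * stepM E (W n) = stepM E (W n) * trM E W n p := by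
    have e1 := trM_add E W n 1 p
    have e2 : trM E W n (p + 1) = stepM E (W (n + p)) * trM E W n p := rfl
    rw [add_comm 1 p, e2, hW] at e1
    rw [e1]; simp [trM]
  have hu : IsUnit (stepM E (W n)).det := by simp
  have h2 : trM E W (n + 1) p = stepM E (W n) * trM E W n p * (stepM E (W n))⁻¹ := by
    rw [← h1, Matrix.mul_nonsing_inv_cancel_right _ _ hu]
  rw [h2, Matrix.trace_mul_comm, ← Matrix.mul_assoc, Matrix.nonsing_inv_mul _ hu, Matrix.one_mul]

/-- For a periodic potential the trace of the monodromy matrix does not depend on the base point. -/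
lemma trM_trace (E : ℝ) {W : ℤ → ℝ} {p : ℕ} (hW : ∀ n, W (n + p) = W n) (n : ℤ) :
    (trM E W n p).trace = disc E W p := by
  induction n using Int.induction_on with
  | zero => rfl
  | succ i ih => rw [trM_trace_succ E hW, ih]
  | pred i ih => rw [← ih, ← trM_trace_succ E hW (-i - 1)]; simp

lemma trM_mulVec {E : ℝ} {W f : ℤ → ℝ} {n : ℤ} {j : ℕ}
    (h : ∀ i : ℕ, i < j → SolAt W E f (n + i)) :
    ![f (n + j), f (n + j - 1)] = (trM E W n j).mulVec ![f n, f (n - 1)] := by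
  induction j with
  | zero => simp [trM]
  | succ j ih =>
    rw [trM, ← Matrix.mulVec_mulVec, ← ih fun i hi => h i (by omega)]
    have h1 := h j (by omega)
    unfold SolAt at h1
    ext i; fin_cases i
    · simp [stepM, Matrix.mulVec, dotProduct, Fin.sum_univ_two]
      rw [← add_assoc]; linarith
    · simp [stepM, Matrix.mulVec, dotProduct, Fin.sum_univ_two]
      congr 1; ring

lemma cayley_two (M : Matrix (Fin 2) (Fin 2) ℝ) (h : M.det = 1) :
    M * M = M.trace • M - 1 := by
  rw [Matrix.det_fin_two] at h
  ext i j
  fin_cases i <;> fin_cases j <;>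
    simp [Matrix.mul_apply, Fin.sum_univ_two, Matrix.trace_fin_two] <;> linarith

/-- Over two periods, solutions satisfy a three-term recurrence with coefficient the discriminant. -/
lemma three_term {E : ℝ} {W f : ℤ → ℝ} {p : ℕ} (hW : ∀ n, W (n + p) = W n) {n : ℤ}
    (h : ∀ i : ℤ, n - p ≤ i → i < n + p → SolAt W E f i) :
    f (n + p) + f (n - p) = disc E W p * f n := by
  have h1 := trM_mulVec (E := E) (W := W) (f := f) (n := n - p) (j := p)
    (fun i hi => h _ (by omega) (by omega))
  have h2 := trM_mulVec (E := E) (W := W) (f := f) (n := n) (j := p)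
    (fun i hi => h _ (by omega) (by omega))
  have h3 : trM E W n p = trM E W (n - p) p := by
    rw [← trM_per E hW (n - p), sub_add_cancel]
  rw [sub_add_cancel] at h1
  rw [h1, Matrix.mulVec_mulVec, h3, cayley_two _ (trM_det _ _ _ _), trM_trace E hW,
    Matrix.sub_mulVec, Matrix.smul_mulVec, ← h1] at h2
  have := congrFun h2 0
  simp at this
  linarith

/-- Iterated maximum principle for the three-term recurrence. -/
lemma decay {f : ℤ → ℝ} {S τ τ₀ : ℝ} {p a b : ℤ} (hS : ∀ n, |f n| ≤ S)
    (hτ₀ : 0 < τ₀) (hτ : τ₀ ≤ |τ|) (hp : 0 ≤ p)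
    (h : ∀ n, a ≤ n - p → n + p ≤ b → f (n + p) + f (n - p) = τ * f n) (i : ℕ) :
    ∀ n, a + i * p ≤ n → n + i * p ≤ b → |f n| ≤ (2 / τ₀) ^ i * S := by
  induction i with
  | zero => intro n _ _; simpa using hS n
  | succ i ih =>
    intro n h1 h2
    push_cast at h1 h2
    have hip : (0 : ℤ) ≤ i * p := by positivity
    have e1 := ih (n + p) (by nlinarith) (by nlinarith)
    have e2 := ih (n - p) (by nlinarith) (by nlinarith)
    have e3 := h n (by nlinarith) (by nlinarith)
    have e4 : |τ| * |f n| ≤ |f (n + p)| + |f (n - p)| := by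
      rw [← abs_mul, ← e3]; exact abs_add_le _ _
    have e5 : τ₀ * |f n| ≤ 2 * ((2 / τ₀) ^ i * S) := by
      have : τ₀ * |f n| ≤ |τ| * |f n| := by gcongr
      linarith
    rw [pow_succ, mul_right_comm, mul_comm _ (2 / τ₀), div_mul_eq_mul_div, le_div_iff₀ hτ₀, mul_comm]
    exact e5

/-! ### Floquet theory for periodic potentials -/

/-- The functional `f ↦ ((H_W - E) f) m` on all sequences. -/
def schrFun (W : ℤ → ℝ) (E : ℝ) (m : ℤ) : (ℤ → ℝ) →ₗ[ℝ] ℝ where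
  toFun f := f (m - 1) + f (m + 1) + (W m - E) * f m
  map_add' f g := by simp only [Pi.add_apply]; ring
  map_smul' c f := by simp only [Pi.smul_apply, smul_eq_mul, RingHom.id_apply]; ring

/-- The three-term expression is a combination of finitely many values of `(H_W - E) f`, because
it vanishes on solutions. -/
lemma three_term_factor (E : ℝ) {W : ℤ → ℝ} {p : ℕ} (hW : ∀ n, W (n + p) = W n) (n : ℤ) :
    ∃ c : Fin (2 * p) → ℝ, ∀ f : ℤ → ℝ, f (n + p) + f (n - p) - disc E W p * f n
      = ∑ i, c i * schrFun W E (n - p + i) f := by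
  let φ : (ℤ → ℝ) →ₗ[ℝ] ℝ :=
    { toFun f := f (n + p) + f (n - p) - disc E W p * f n
      map_add' f g := by simp only [Pi.add_apply]; ring
      map_smul' c f := by simp only [Pi.smul_apply, smul_eq_mul, RingHom.id_apply]; ring }
  have hmem : φ ∈ Submodule.span ℝ
      (range fun i : Fin (2 * p) => schrFun W E (n - p + (i : ℕ))) := by
    apply mem_span_of_iInf_ker_le_ker
    intro f hf
    rw [Submodule.mem_iInf] at hf
    have h := three_term (E := E) (f := f) hW (n := n) (fun i h1 h2 => by
      have h3 := hf ⟨(i - (n - p)).toNat, by omega⟩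
      have h4 : n - p + (((i - (n - p)).toNat : ℕ) : ℤ) = i := by omega
      simp only [h4] at h3
      exact h3)
    change f (n + p) + f (n - p) - disc E W p * f n = 0
    rw [h]; ring
  obtain ⟨c, hc⟩ := (Submodule.mem_span_range_iff_exists_fun ℝ).1 hmem
  refine ⟨c, fun f => ?_⟩
  have := LinearMap.congr_fun hc f
  change _ = f (n + p) + f (n - p) - disc E W p * f n at this
  rw [← this]
  simp

lemma per_mul {α : Type*} {W : ℤ → α} {p : ℕ} (hW : ∀ n, W (n + p) = W n) (n j : ℤ) :
    W (n + j * p) = W n := by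
  induction j using Int.induction_on with
  | zero => simp
  | succ i ih => rw [add_mul, one_mul, ← add_assoc, hW, ih]
  | pred i ih => rw [← ih, ← hW]; congr 1; ring

lemma per_emod {α : Type*} {W : ℤ → α} {p : ℕ} (hW : ∀ n, W (n + p) = W n) (n : ℤ) :
    W (n % p) = W n := by
  rw [← per_mul hW (n % p) (n / p)]
  congr 1
  rw [mul_comm]; exact Int.emod_add_mul_ediv n p

lemma per_bounded {W : ℤ → ℝ} {p : ℕ} (hp : 0 < p) (hW : ∀ n, W (n + p) = W n) :
    ∃ C, ∀ n, |W n| ≤ C := by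
  refine ⟨∑ i ∈ Finset.range p, |W i|, fun n => ?_⟩
  have hp' : (0 : ℤ) < p := by exact_mod_cast hp
  have h1 := Int.emod_nonneg n hp'.ne'
  have h2 := Int.emod_lt_of_pos n hp'
  rw [← per_emod hW n]
  have h3 : n % p = (((n % p).toNat : ℕ) : ℤ) := by omega
  rw [h3]
  exact Finset.single_le_sum (f := fun i : ℕ => |W i|) (fun i _ => abs_nonneg _)
    (Finset.mem_range.2 (by omega))

/-- Energies with discriminant outside `[-2, 2]` are not in the spectrum. By `three_term_factor`,
`disc • f` equals a sum of two translates of `f`, of norm at most `2 ‖f‖`, up to a term bounded by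
a multiple of `‖(H_W - E) f‖`. -/
lemma not_mem_spectrum_of_disc {E : ℝ} {W : ℤ → ℝ} {p : ℕ} (hp : 0 < p)
    (hW : ∀ n, W (n + p) = W n) (hd : 2 < |disc E W p|) : E ∉ SchrodingerSpectrum W := by
  obtain ⟨C, hC⟩ := per_bounded hp hW
  rw [not_mem_spectrum_iff hC]
  choose c hc using three_term_factor E hW
  set c' : Fin (2 * p) → ℤ → ℝ := fun i n => c (n % p) i with hc'
  have hper : ∀ i n, c' i (n + p) = c' i n := fun i n => by simp [hc']
  choose D hD using fun i => per_bounded hp (hper i)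
  have hD0 : ∀ i, 0 ≤ D i := fun i => (abs_nonneg _).trans (hD i 0)
  set A := opSub (schr W C hC) E with hA
  have hAf : ∀ (f : Ell2) n, A f n = f (n - 1) + f (n + 1) + (W n - E) * f n := fun f n => by
    have : A f n = schr W C hC f n - E * f n := rfl
    rw [this, schr_apply]; ring
  have hid : ∀ f : Ell2, disc E W p • f = shiftL p f + shiftL (-p) f
      - ∑ i, mulL (c' i) (D i) (hD i) (shiftL (-p + (i : ℕ)) (A f)) := by
    intro f
    ext n
    have h1 := hc (n % p) (fun m => f (m + n / p * p))
    have hn : n % p + n / p * p = n := by rw [mul_comm]; exact Int.emod_add_mul_ediv n p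
    have e : (shiftL p f + shiftL (-p) f
      - ∑ i, mulL (c' i) (D i) (hD i) (shiftL (-p + (i : ℕ)) (A f)) : Ell2) n
      = f (n + p) + f (n + -p)
        - (∑ i, mulL (c' i) (D i) (hD i) (shiftL (-p + (i : ℕ)) (A f)) : Ell2) n := rfl
    rw [e, lp.coeFn_sum, Finset.sum_apply]
    have e2 : (disc E W p • f) n = disc E W p * f n := rfl
    rw [e2]
    have e3 : ∀ i : Fin (2 * p), mulL (c' i) (D i) (hD i) (shiftL (-p + (i : ℕ)) (A f)) n
        = c (n % p) i * schrFun W E (n % p - p + i) (fun m => f (m + n / p * p)) := by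
      intro i
      rw [mulL_apply, shiftL_apply, hAf]
      change _ = _ * (f (n % p - p + i - 1 + n / p * p) + f (n % p - p + i + 1 + n / p * p)
        + (W (n % p - p + i) - E) * f (n % p - p + i + n / p * p))
      rw [← per_mul hW (n % p - p + i) (n / p)]
      rw [show n % p - p + i - 1 + n / p * p = (n % p + n / p * p) + (-p + i) - 1 by ring,
        show n % p - p + i + 1 + n / p * p = (n % p + n / p * p) + (-p + i) + 1 by ring,
        show n % p - p + i + n / p * p = (n % p + n / p * p) + (-p + i) by ring, hn]
    rw [Finset.sum_congr rfl fun i _ => e3 i, ← h1]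
    rw [show n % p + p + n / p * p = (n % p + n / p * p) + p by ring,
      show n % p - p + n / p * p = (n % p + n / p * p) + -p by ring, hn]
    ring
  refine ⟨(|disc E W p| - 2) / (∑ i, D i + 1), div_pos (by linarith)
    (by have := Finset.sum_nonneg fun i (_ : i ∈ Finset.univ) => hD0 i; linarith), fun f => ?_⟩
  have hsum : 0 < ∑ i, D i + 1 := by
    have := Finset.sum_nonneg fun i (_ : i ∈ Finset.univ) => hD0 i
    linarith
  have hn : |disc E W p| * ‖f‖ ≤ 2 * ‖f‖ + (∑ i, D i) * ‖A f‖ := by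
    rw [← Real.norm_eq_abs, ← norm_smul, hid f, Finset.sum_mul]
    refine (norm_sub_le _ _).trans (add_le_add ?_ ?_)
    · refine (norm_add_le _ _).trans ?_
      rw [(shiftL _).norm_map, (shiftL _).norm_map]; linarith
    · refine (norm_sum_le _ _).trans (Finset.sum_le_sum fun i _ => ?_)
      refine (mulL_norm_le _ _ _ _).trans ?_
      rw [(shiftL _).norm_map]
  rw [div_mul_eq_mul_div, div_le_iff₀ hsum]
  nlinarith [norm_nonneg (A f)]

/-- The skew product `(n, (f n, f (n - 1))) ↦ (n + 1, (f (n + 1), f n))`. -/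
def skew (W : ℤ → ℝ) (E : ℝ) : Equiv.Perm (ℤ × ℝ × ℝ) where
  toFun x := (x.1 + 1, (E - W x.1) * x.2.1 - x.2.2, x.2.1)
  invFun x := (x.1 - 1, x.2.2, (E - W (x.1 - 1)) * x.2.2 - x.2.1)
  left_inv x := by ext <;> simp
  right_inv x := by ext <;> simp

/-- Every pair of initial values `f 0`, `f (-1)` extends to a solution on `ℤ`. -/
lemma exists_solution (W : ℤ → ℝ) (E a b : ℝ) :
    ∃ f : ℤ → ℝ, f 0 = a ∧ f (-1) = b ∧ ∀ n, SolAt W E f n := by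
  set X : ℤ → ℤ × ℝ × ℝ := fun n => (skew W E ^ n) (0, a, b) with hX
  have hs : ∀ n, X (n + 1) = skew W E (X n) := fun n => by
    simp only [hX]; rw [add_comm, zpow_add, zpow_one, Equiv.Perm.mul_apply]
  have h1 : ∀ n, (X n).1 = n := by
    intro n
    induction n using Int.induction_on with
    | zero => simp [hX]
    | succ i ih => rw [hs]; simp [skew, ih]
    | pred i ih =>
      have := hs (-i - 1)
      rw [sub_add_cancel] at this
      rw [this] at ih
      simp only [skew, Equiv.coe_fn_mk] at ih
      linarith
  have h2 : ∀ n, (X (n + 1)).2.2 = (X n).2.1 := fun n => by rw [hs]; rfl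
  have h3 : ∀ n, (X (n + 1)).2.1 = (E - W n) * (X n).2.1 - (X n).2.2 := fun n => by
    rw [hs]; simp [skew, h1]
  refine ⟨fun n => (X n).2.1, by simp [hX], ?_, fun n => ?_⟩
  · have := h2 (-1)
    change (X (-1)).2.1 = b
    rw [← this]; simp [hX]
  · have e := h2 (n - 1)
    rw [sub_add_cancel] at e
    simp only [SolAt, h3, ← e]; ring

/-- Elliptic case: `x (i + 1)² - τ x i x (i + 1) + x i²` is conserved and is a definite quadratic
form when `|τ| < 2`. -/
lemma bdd_of_quad {x : ℤ → ℝ} {τ : ℝ} (hτ : |τ| < 2)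
    (h : ∀ i, x (i + 1) + x (i - 1) = τ * x i) : ∃ C, ∀ i, |x i| ≤ C := by
  set Q := x 1 ^ 2 - τ * x 0 * x 1 + x 0 ^ 2 with hQ
  have hc : ∀ i, x (i + 1) ^ 2 - τ * x i * x (i + 1) + x i ^ 2 = Q := by
    intro i
    induction i using Int.induction_on with
    | zero => simp [hQ]
    | succ i ih =>
      have h1 := h (i + 1)
      rw [add_sub_cancel_right] at h1
      rw [← ih, show x (i + 1 + 1) = τ * x (i + 1) - x i by linarith]; ring
    | pred i ih =>
      have h1 := h (-i)
      rw [← ih, sub_add_cancel, show x (-i + 1) = τ * x (-i) - x (-i - 1) by linarith]; ring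
  refine ⟨Real.sqrt (Q / (1 - |τ| / 2)), fun i => Real.abs_le_sqrt ?_⟩
  rw [le_div_iff₀ (by linarith), ← hc i]
  have h1 : τ * x i * x (i + 1) ≤ |τ| * ((x i ^ 2 + x (i + 1) ^ 2) / 2) := by
    calc τ * x i * x (i + 1) ≤ |τ * x i * x (i + 1)| := le_abs_self _
      _ = |τ| * (|x i| * |x (i + 1)|) := by rw [abs_mul, abs_mul, mul_assoc]
      _ ≤ _ := by
        gcongr
        nlinarith [sq_nonneg (|x i| - |x (i + 1)|), sq_abs (x i), sq_abs (x (i + 1))]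
  nlinarith [sq_nonneg (x (i + 1)), abs_nonneg τ]

/-- Floquet theory: a spectral energy of a periodic operator has a bounded solution. -/
lemma exists_bounded_solution {E : ℝ} {W : ℤ → ℝ} {p : ℕ} (hp : 0 < p)
    (hW : ∀ n, W (n + p) = W n) (hE : E ∈ SchrodingerSpectrum W) :
    ∃ f : ℤ → ℝ, (∃ n, f n ≠ 0) ∧ (∃ C, ∀ n, |f n| ≤ C) ∧ ∀ n, SolAt W E f n := by
  have hd : |disc E W p| ≤ 2 := by
    by_contra! h; exact not_mem_spectrum_of_disc hp hW h hE
  rcases hd.lt_or_eq with hlt | heq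
  · obtain ⟨f, hf0, -, hf⟩ := exists_solution W E 1 0
    refine ⟨f, ⟨0, by rw [hf0]; exact one_ne_zero⟩, ?_, hf⟩
    have hb : ∀ n : ℤ, ∃ C, ∀ i : ℤ, |f (n + i * p)| ≤ C := fun n => by
      apply bdd_of_quad (x := fun i => f (n + i * p)) hlt
      intro i
      have := three_term (E := E) (f := f) hW (n := n + i * p) (fun i _ _ => hf i)
      rw [← this]
      congr 2 <;> ring
    choose C hC using hb
    refine ⟨∑ i ∈ Finset.range p, |C i|, fun n => ?_⟩
    have hp' : (0 : ℤ) < p := by exact_mod_cast hp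
    have h1 := Int.emod_nonneg n hp'.ne'
    have h2 := Int.emod_lt_of_pos n hp'
    have h3 : n % p = (((n % p).toNat : ℕ) : ℤ) := by omega
    have h4 := hC (n % p) (n / p)
    rw [mul_comm, Int.emod_add_mul_ediv, h3] at h4
    exact (h4.trans (le_abs_self _)).trans
      (Finset.single_le_sum (f := fun i : ℕ => |C i|) (fun i _ => abs_nonneg _)
        (Finset.mem_range.2 (by omega)))
  · -- the monodromy matrix has the eigenvalue `σ = disc / 2 = ±1`
    set σ := disc E W p / 2 with hσ
    have hσ2 : σ ^ 2 = 1 := by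
      rw [← sq_abs, hσ, abs_div, heq]; norm_num
    have hσa : |σ| = 1 := by rw [hσ, abs_div, heq]; norm_num
    set M := trM E W 0 p with hM
    have hdet : (M - σ • (1 : Matrix (Fin 2) (Fin 2) ℝ)).det = 0 := by
      have h1 : M.det = 1 := trM_det _ _ _ _
      have h2 : M.trace = 2 * σ := by rw [hσ]; change disc E W p = _; ring
      rw [Matrix.det_fin_two] at h1
      rw [Matrix.trace_fin_two] at h2
      rw [Matrix.det_fin_two]
      simp only [Matrix.sub_apply, Matrix.smul_apply, Matrix.one_apply_eq, smul_eq_mul, mul_one,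
        Matrix.one_apply_ne (zero_ne_one : (0 : Fin 2) ≠ 1),
        Matrix.one_apply_ne (one_ne_zero : (1 : Fin 2) ≠ 0), mul_zero, sub_zero]
      linear_combination h1 - σ * h2 - hσ2
    obtain ⟨v, hv, hv0⟩ := Matrix.exists_mulVec_eq_zero_iff.2 hdet
    obtain ⟨f, hf0, hf1, hf⟩ := exists_solution W E (v 0) (v 1)
    have hvf : v = ![f 0, f (0 - 1)] := by
      ext i; fin_cases i <;> simp [hf0, hf1]
    have h1 := trM_mulVec (E := E) (W := W) (f := f) (n := 0) (j := p) (fun i _ => hf _)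
    rw [← hvf, ← hM] at h1
    rw [Matrix.sub_mulVec, Matrix.smul_mulVec, Matrix.one_mulVec, sub_eq_zero] at hv0
    rw [hv0] at h1
    have e0 : f p = σ * f 0 := by have := congrFun h1 0; simpa [hf0] using this
    have e1 : f (p - 1) = σ * f (-1) := by have := congrFun h1 1; simpa [hf1] using this
    set d : ℤ → ℝ := fun n => f (n - 1 + p) - σ * f (n - 1) with hd'
    have hdz : ∀ n, d n = 0 := by
      apply solution_eq_zero (W := fun n => W (n - 1)) (E := E)
      · intro n
        have g1 := hf (n - 1 + p)
        have g2 := hf (n - 1)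
        unfold SolAt at g1 g2
        rw [hW] at g1
        simp only [hd']
        rw [show n - 1 - 1 + (p : ℤ) = n - 1 + p - 1 by ring,
          show n + 1 - 1 + (p : ℤ) = n - 1 + p + 1 by ring,
          show n + 1 - 1 = n - 1 + 1 by ring]
        linear_combination g1 - σ * g2
      · simp only [hd']; rw [show (0 : ℤ) - 1 + p = p - 1 by ring, e1]; simp
      · simp [hd', e0]
    have hper : ∀ n, f (n + p) = σ * f n := fun n => by
      have := hdz (n + 1)
      simp only [hd', add_sub_cancel_right] at this
      linarith
    refine ⟨f, ?_, ?_, hf⟩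
    · by_contra! hz
      exact hv (by rw [hvf, hz, hz]; simp)
    · obtain ⟨C, hC⟩ := per_bounded (W := fun n => |f n|) hp (fun n => by
        simp only [hper, abs_mul, hσa, one_mul])
      exact ⟨C, fun n => by simpa using hC n⟩

/-! ### Opening gaps by periodic perturbations -/

/-- An upper triangular unipotent matrix. Changing the potential at one site multiplies the
transfer matrix by a shear (`stepM_add`). -/
def shear (t : ℝ) : Matrix (Fin 2) (Fin 2) ℝ := !![1, t; 0, 1]

lemma stepM_add (E v a : ℝ) : stepM E (v + a) = shear (-a) * stepM E v := by
  ext i j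
  fin_cases i <;> fin_cases j <;> simp [stepM, shear, Matrix.mul_apply, Fin.sum_univ_two]
  ring

/-- A small shear makes the lower left entry nonzero, so that by `trace_shear_mul` the trace can be
moved by a further shear. -/
lemma exists_lower_ne {K L : Matrix (Fin 2) (Fin 2) ℝ} (hL : L.det = 1) (hK : K 1 0 ≠ 0) {ε : ℝ}
    (hε : 0 < ε) : ∃ s, |s| ≤ ε ∧ (K * shear s * L) 1 0 ≠ 0 := by
  have hf : ∀ s, (K * shear s * L) 1 0 = K 1 0 * L 0 0 + K 1 1 * L 1 0 + s * (K 1 0 * L 1 0) := by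
    intro s
    simp [Matrix.mul_apply, Fin.sum_univ_two, shear]; ring
  by_contra! hcon
  have h0 := hcon 0 (by simpa using hε.le)
  have h1 := hcon ε (by rw [abs_of_pos hε])
  rw [hf] at h0 h1
  have h2 : L 1 0 = 0 := by
    have : ε * (K 1 0 * L 1 0) = 0 := by linarith
    simpa [hε.ne', hK] using this
  have h3 : L 0 0 = 0 := by
    rw [h2] at h0
    simpa [hK] using h0
  rw [Matrix.det_fin_two, h2, h3] at hL
  simp at hL

lemma trace_shear_mul (t : ℝ) (N : Matrix (Fin 2) (Fin 2) ℝ) :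
    (shear t * N).trace = N.trace + t * N 1 0 := by
  simp only [Matrix.trace_fin_two, Matrix.mul_apply, Fin.sum_univ_two]
  simp [shear]; ring

/-- Chebyshev formula for the powers of a matrix in `SL(2, ℝ)` with trace `2 cos θ`. -/
lemma pow_of_trace_cos {R : Matrix (Fin 2) (Fin 2) ℝ} (hR : R.det = 1) {θ : ℝ}
    (hθ : R.trace = 2 * Real.cos θ) (n : ℕ) :
    Real.sin θ • R ^ n = Real.sin (n * θ) • R - Real.sin (n * θ - θ) • 1 := by
  induction n with
  | zero => simp
  | succ n ih =>
    rw [pow_succ, ← Matrix.smul_mul, ih, Matrix.sub_mul, Matrix.smul_mul, cayley_two R hR, hθ,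
      Matrix.smul_mul, Matrix.one_mul]
    have h1 : Real.sin (((n + 1 : ℕ) : ℝ) * θ)
        = 2 * Real.cos θ * Real.sin (n * θ) - Real.sin (n * θ - θ) := by
      push_cast
      rw [add_mul, one_mul, Real.sin_add, Real.sin_sub]; ring
    have h2 : ((n + 1 : ℕ) : ℝ) * θ - θ = n * θ := by push_cast; ring
    rw [h1, h2]
    module

/-- In an interval of traces inside `[-2, 2]` some elliptic matrix has finite order up to sign. -/
lemma exists_rational_angle {c d ε : ℝ} (hd : d ≠ 0) (hε : 0 < ε)
    (h : ∀ t, |t| ≤ ε → |c + t * d| ≤ 2) :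
    ∃ t, |t| ≤ ε ∧ ∃ (b : ℕ) (θ : ℝ) (m : ℤ), 0 < b ∧ b * θ = m * Real.pi ∧ Real.sin θ ≠ 0 ∧
      c + t * d = 2 * Real.cos θ := by
  have h0 := abs_le.1 (h 0 (by simpa using hε.le))
  simp only [zero_mul, add_zero] at h0
  set θ₀ := Real.arccos (c / 2) with hθ₀
  have hc : 2 * Real.cos θ₀ = c := by
    rw [hθ₀, Real.cos_arccos (by linarith) (by linarith)]; ring
  have hcont : Continuous fun x : ℝ => |2 * Real.cos (x * Real.pi) - c| := by fun_prop
  have hopen : IsOpen {x : ℝ | |2 * Real.cos (x * Real.pi) - c| < ε * |d|} :=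
    isOpen_lt hcont continuous_const
  have hne : θ₀ / Real.pi ∈ {x : ℝ | |2 * Real.cos (x * Real.pi) - c| < ε * |d|} := by
    have : θ₀ / Real.pi * Real.pi = θ₀ := by field_simp
    simp only [mem_ofPred_eq, this, hc, sub_self, abs_zero]
    positivity
  obtain ⟨x, hx, r, rfl⟩ := Rat.isDenseEmbedding_coe_real.dense.inter_open_nonempty _ hopen ⟨_, hne⟩
  have hx' : |2 * Real.cos (r * Real.pi) - c| < ε * |d| := hx
  set t := (2 * Real.cos (r * Real.pi) - c) / d with ht
  have htd : c + t * d = 2 * Real.cos (r * Real.pi) := by rw [ht]; field_simp; ring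
  have htε : |t| < ε := by
    rw [ht, abs_div, div_lt_iff₀ (abs_pos.2 hd)]; exact hx'
  refine ⟨t, htε.le, r.den, r * Real.pi, r.num, r.pos, ?_, ?_, htd⟩
  · rw [← mul_assoc, mul_comm (r.den : ℝ)]
    congr 1
    exact_mod_cast Rat.mul_den_eq_num r
  · -- `|cos| = 1` is impossible: the trace could then leave `[-2, 2]`
    intro hs
    have h1 : Real.cos (r * Real.pi) ^ 2 = 1 := by
      have := Real.sin_sq_add_cos_sq (r * Real.pi); rw [hs] at this; linarith
    have h2 : (c + t * d) ^ 2 = 4 := by rw [htd]; linarith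
    set η := (ε - |t|) with hη
    have hη0 : 0 < η := by linarith
    have h3 := h (t + η) ((abs_add_le _ _).trans (by rw [abs_of_pos hη0]; linarith))
    have h4 := h (t - η) ((abs_sub _ _).trans (by rw [abs_of_pos hη0]; linarith))
    rw [← sq_le_sq₀ (abs_nonneg _) (by norm_num), sq_abs] at h3 h4
    have : 0 < (η * d) ^ 2 := by positivity
    nlinarith

/-- If the monodromy matrix is `σ • 1`, inserting two shears of opposite sign pushes the trace
beyond `2 |σ|` when `K 1 0 ≠ 0`. -/
lemma trace_two_shears {K L : Matrix (Fin 2) (Fin 2) ℝ} (hK : K.det = 1) {σ : ℝ}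
    (hKL : K * L = σ • 1) (u s : ℝ) :
    (shear u * K * shear s * L).trace = σ * (2 - u * s * K 1 0 ^ 2) := by
  have hadj : L = σ • K.adjugate := by
    have h := congrArg (fun X => K.adjugate * X) hKL
    simp only [← Matrix.mul_assoc, Matrix.adjugate_mul, hK, one_smul, Matrix.one_mul] at h
    rw [h, Matrix.mul_smul, Matrix.mul_one]
  rw [Matrix.det_fin_two] at hK
  rw [hadj, Matrix.adjugate_fin_two]
  simp only [Matrix.trace_fin_two, Matrix.mul_apply, Fin.sum_univ_two]
  simp [shear]
  linear_combination 2 * σ * hK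

/-- The potential whose spectrum is studied. -/
def sievePot (lam : ℝ) (V : ℤ → ℝ) (k : ℕ) : ℤ → ℝ := fun n => lam * sieve V k n

lemma sieve_mul (V : ℤ → ℝ) {k : ℕ} (hk : 0 < k) (i : ℤ) : sieve V k (k * i) = V i := by
  have : (k : ℤ) ≠ 0 := by exact_mod_cast hk.ne'
  simp only [sieve, dvd_mul_right, if_true]
  rw [Int.mul_ediv_cancel_left _ this]

lemma sievePot_per {V : ℤ → ℝ} {q k : ℕ} (lam : ℝ) (hk : 0 < k) (hV : ∀ n, V (n + q) = V n)
    (n : ℤ) : sievePot lam V k (n + (k * q : ℕ)) = sievePot lam V k n := by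
  have hk' : (k : ℤ) ≠ 0 := by exact_mod_cast hk.ne'
  simp only [sievePot, sieve]
  push_cast
  have hiff : (k : ℤ) ∣ n + k * q ↔ (k : ℤ) ∣ n := by
    rw [Int.dvd_add_left (Dvd.intro _ rfl)]
  by_cases h : (k : ℤ) ∣ n
  · rw [if_pos h, if_pos (hiff.2 h), Int.add_mul_ediv_left _ _ hk', hV]
  · rw [if_neg h, if_neg (fun hdvd => h (hiff.1 hdvd))]

/-- Perturb a potential by `a` on `qℤ` and by `b` on `qℤ - 1`. -/
def pert (V : ℤ → ℝ) (q : ℕ) (a b : ℝ) : ℤ → ℝ := fun n =>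
  V n + (if (q : ℤ) ∣ n then a else 0) + (if (q : ℤ) ∣ n + 1 then b else 0)

lemma pert_per {V : ℤ → ℝ} {q : ℕ} (hV : ∀ n, V (n + q) = V n) (a b : ℝ) (n : ℤ) :
    pert V q a b (n + q) = pert V q a b n := by
  have h2 : (q : ℤ) ∣ n + q + 1 ↔ (q : ℤ) ∣ n + 1 := by
    rw [add_right_comm]; simp
  simp only [pert, hV, dvd_add_self_right, h2]

lemma pert_close (V : ℤ → ℝ) (q : ℕ) (a b : ℝ) (n : ℤ) :
    |pert V q a b n - V n| ≤ |a| + |b| := by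
  have : pert V q a b n - V n
      = (if (q : ℤ) ∣ n then a else 0) + (if (q : ℤ) ∣ n + 1 then b else 0) := by
    simp only [pert]; ring
  rw [this]
  refine (abs_add_le _ _).trans (add_le_add ?_ ?_) <;> split_ifs <;> simp

lemma trM_zero (E : ℝ) {W : ℤ → ℝ} {n : ℤ} {j : ℕ} (h : ∀ i : ℕ, i < j → W (n + i) = 0) :
    trM E W n j = stepM E 0 ^ j := by
  induction j with
  | zero => rfl
  | succ j ih => rw [trM, ih fun i hi => h i (by omega), pow_succ', h j (by omega)]

/-- The monodromy matrix of the perturbed sieved potential. The two perturbed sieve sites are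
consecutive and enter as two shears, separated by the factor `K` of one sieve step. -/
lemma trM_pert (E lam : ℝ) {V : ℤ → ℝ} {q k : ℕ} (hq : 2 ≤ q) (hk : 0 < k)
    (hV : ∀ n, V (n + q) = V n) :
    ∃ L : Matrix (Fin 2) (Fin 2) ℝ, L.det = 1 ∧ ∀ a b : ℝ,
      trM E (sievePot lam (pert V q a b) k) 1 (k * q)
        = shear (-(lam * a)) * (stepM E (lam * V 0) * stepM E 0 ^ (k - 1)) * shear (-(lam * b)) * L := by
  obtain ⟨q, rfl⟩ : ∃ r, q = r + 2 := ⟨q - 2, by omega⟩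
  obtain ⟨k, rfl⟩ : ∃ r, k = r + 1 := ⟨k - 1, by omega⟩
  have hk' : ((k + 1 : ℕ) : ℤ) ≠ 0 := by positivity
  refine ⟨stepM E (lam * V (-1)) * trM E (sievePot lam V (k + 1)) 1 ((k + 1) * q + k), by simp, ?_⟩
  intro a b
  set W := sievePot lam (pert V (q + 2) a b) (k + 1) with hWdef
  have e1 : (k + 1) * (q + 2) = ((k + 1) * q + k + 1) + (k + 1) := by ring
  have hP0 : pert V (q + 2) a b ((q + 2 : ℕ) : ℤ) = V 0 + a := by
    have h1 := hV 0
    rw [zero_add] at h1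
    have h2 : ¬ (((q + 2 : ℕ) : ℤ) ∣ ((q + 2 : ℕ) : ℤ) + 1) := by
      rw [dvd_add_right (dvd_refl _)]
      intro h
      have := Int.le_of_dvd one_pos h
      push_cast at this; omega
    simp only [pert, h1, dvd_refl, if_true, h2, if_false, add_zero]
  have hP1 : pert V (q + 2) a b ((q + 1 : ℕ) : ℤ) = V (-1) + b := by
    have h1 := hV (-1)
    have e : (-1 : ℤ) + ((q + 2 : ℕ) : ℤ) = ((q + 1 : ℕ) : ℤ) := by push_cast; ring
    rw [e] at h1
    have h2 : ¬ (((q + 2 : ℕ) : ℤ) ∣ ((q + 1 : ℕ) : ℤ)) := by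
      intro h
      have := Int.le_of_dvd (by positivity) h
      push_cast at this; omega
    have h3 : ((q + 1 : ℕ) : ℤ) + 1 = ((q + 2 : ℕ) : ℤ) := by push_cast; ring
    simp only [pert, h1, h2, h3, dvd_refl, if_true, if_false, add_zero]
  have hW0 : W (((k + 1 : ℕ) : ℤ) * ((q + 2 : ℕ) : ℤ)) = lam * V 0 + lam * a := by
    rw [hWdef, sievePot, sieve_mul _ (Nat.succ_pos k), hP0, mul_add]
  have hW1 : W (((k + 1 : ℕ) : ℤ) * ((q + 1 : ℕ) : ℤ)) = lam * V (-1) + lam * b := by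
    rw [hWdef, sievePot, sieve_mul _ (Nat.succ_pos k), hP1, mul_add]
  have hrest : trM E W 1 ((k + 1) * q + k)
      = trM E (sievePot lam V (k + 1)) 1 ((k + 1) * q + k) := by
    apply trM_congr
    intro i hi
    rw [hWdef]
    simp only [sievePot, sieve]
    congr 1
    split_ifs with hdv
    · obtain ⟨c, hc⟩ := hdv
      rw [hc, Int.mul_ediv_cancel_left _ hk']
      push_cast at hc
      have hc1 : 0 < c := by
        by_contra hneg
        push Not at hneg
        have : ((k : ℤ) + 1) * c ≤ 0 := mul_nonpos_of_nonneg_of_nonpos (by positivity) hneg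
        omega
      have hc2 : c < q + 1 := by
        by_contra hneg
        push Not at hneg
        have h5 : ((k : ℤ) + 1) * (q + 1) ≤ ((k : ℤ) + 1) * c := by gcongr
        have h6 : (i : ℤ) < (k + 1) * q + k := by exact_mod_cast hi
        linarith
      have h2 : ¬ (((q + 2 : ℕ) : ℤ) ∣ c) := by
        intro h
        have := Int.le_of_dvd hc1 h
        push_cast at this; omega
      have h3 : ¬ (((q + 2 : ℕ) : ℤ) ∣ c + 1) := by
        intro h
        have := Int.le_of_dvd (by omega) h
        push_cast at this; omega
      simp only [pert, h2, h3, if_false, add_zero]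
    · rfl
  have hz : trM E W (1 + ((k + 1) * q + k + 1 : ℕ)) k = stepM E 0 ^ k := by
    apply trM_zero
    intro i hi
    rw [hWdef]
    simp only [sievePot, sieve]
    rw [if_neg, mul_zero]
    intro hdv
    have e : (1 : ℤ) + ((k + 1) * q + k + 1 : ℕ) + i = ((k + 1 : ℕ) : ℤ) * ((q + 1 : ℕ) : ℤ) + (1 + i) := by
      push_cast; ring
    rw [e, dvd_add_right (Dvd.intro _ rfl)] at hdv
    have := Int.le_of_dvd (by omega) hdv
    push_cast at this; omega
  rw [e1, trM_add, trM, hz, trM, hrest]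
  have s1 : (1 : ℤ) + ((k + 1) * q + k + 1 : ℕ) + (k : ℕ) = ((k + 1 : ℕ) : ℤ) * ((q + 2 : ℕ) : ℤ) := by
    push_cast; ring
  have s2 : (1 : ℤ) + ((k + 1) * q + k : ℕ) = ((k + 1 : ℕ) : ℤ) * ((q + 1 : ℕ) : ℤ) := by
    push_cast; ring
  rw [s1, s2, hW0, hW1, stepM_add, stepM_add, Nat.add_sub_cancel]
  simp only [Matrix.mul_assoc]

lemma pert_zero (V : ℤ → ℝ) (q : ℕ) : pert V q 0 0 = V := by
  ext n; simp [pert]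

lemma shear_zero : shear 0 = 1 := by
  ext i j; fin_cases i <;> fin_cases j <;> simp [shear]

lemma shear_det (t : ℝ) : (shear t).det = 1 := by simp [shear, Matrix.det_fin_two]

lemma trM_mul_per (E : ℝ) {W : ℤ → ℝ} {p : ℕ} (hW : ∀ n, W (n + p) = W n) (n : ℤ) (b : ℕ) :
    trM E W n (p * b) = trM E W n p ^ b := by
  induction b with
  | zero => simp [trM]
  | succ b ih =>
    have hb : trM E W (n + p) (p * b) = trM E W n (p * b) := trM_per E hW n _
    rw [mul_add, mul_one, add_comm, trM_add, hb, ih, pow_succ]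

/-- Gap opening: away from the energies at which a Dirichlet solution fits between the sieve
sites, a small periodic perturbation pushes the energy into a spectral gap. -/
lemma gap_opening {V : ℤ → ℝ} {q k : ℕ} (hq : 0 < q) (hk : 0 < k) (hV : ∀ n, V (n + q) = V n)
    {ε lam E : ℝ} (hε : 0 < ε) (hlam : lam ≠ 0) (hE : (stepM E 0 ^ (k - 1)) 0 0 ≠ 0) :
    ∃ (V' : ℤ → ℝ) (p : ℕ), 0 < p ∧ (∀ n, V' (n + p) = V' n) ∧ (∀ n, |V' n - V n| ≤ ε) ∧
      2 < |disc E (sievePot lam V' k) (k * p)| := by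
  -- a period of at least `2` is needed for two distinct perturbed sites per period
  wlog hq2 : 2 ≤ q generalizing q
  · exact this (q := q * 2) (by omega) (fun n => by
      have := per_mul hV n 2
      rw [← this]; congr 1; push_cast; ring) (by omega)
  have hlam0 : 0 < |lam| := abs_pos.2 hlam
  -- four perturbations are made in total, each of size at most `ε / 4` before coupling
  set ε₁ := |lam| * ε / 4 with hε₁
  have hε₁0 : 0 < ε₁ := by positivity
  have hscale : ∀ x, |x| ≤ ε₁ → |-(x / lam)| ≤ ε / 4 := fun x hx => by
    rw [abs_neg, abs_div, div_le_iff₀ hlam0]; linarith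
  have hscale' : ∀ x, -(lam * -(x / lam)) = x := fun x => by field_simp
  have hK10 : ∀ v, (stepM E v * stepM E 0 ^ (k - 1)) 1 0 = (stepM E 0 ^ (k - 1)) 0 0 := fun v => by
    simp [stepM, Matrix.mul_apply, Fin.sum_univ_two]
  have hKdet : ∀ v, (stepM E v * stepM E 0 ^ (k - 1)).det = 1 := fun v => by simp
  obtain ⟨L, hL, hT⟩ := trM_pert E lam hq2 hk hV
  set K := stepM E (lam * V 0) * stepM E 0 ^ (k - 1) with hK
  obtain ⟨s₀, hs₀, hN⟩ := exists_lower_ne hL (by rw [hK, hK10]; exact hE : K 1 0 ≠ 0) hε₁0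
  set N := K * shear s₀ * L with hNdef
  have hV1 : ∀ t, trM E (sievePot lam (pert V q (-(t / lam)) (-(s₀ / lam))) k) 1 (k * q)
      = shear t * N := fun t => by
    rw [hT, hscale', hscale', hNdef]; simp only [Matrix.mul_assoc]
  by_cases hex : ∃ t, |t| ≤ ε₁ ∧ 2 < |(shear t * N).trace|
  · obtain ⟨t, ht, h2⟩ := hex
    refine ⟨pert V q (-(t / lam)) (-(s₀ / lam)), q, hq, pert_per hV _ _, fun n => ?_, ?_⟩
    · have h1 := hscale t ht
      have h3 := hscale s₀ hs₀
      linarith [pert_close V q (-(t / lam)) (-(s₀ / lam)) n]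
    · rw [← trM_trace E (sievePot_per lam hk (pert_per hV _ _)) 1, hV1]; exact h2
  -- otherwise the trace stays in `[-2, 2]` and some matrix in the family has finite order up to
  -- sign; over `b` periods it becomes `± 1`, and two opposite shears then open a gap
  push Not at hex
  obtain ⟨t, ht, b, θ, m, hb, hbθ, hsin, htr⟩ :=
    exists_rational_angle (c := N.trace) hN hε₁0 (fun t ht => by
      rw [← trace_shear_mul]; exact hex t ht)
  set V₁ := pert V q (-(t / lam)) (-(s₀ / lam)) with hV₁
  have hV₁per : ∀ n, V₁ (n + q) = V₁ n := pert_per hV _ _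
  set R := shear t * N with hR
  have hRdet : R.det = 1 := by
    rw [hR, hNdef, Matrix.det_mul, Matrix.det_mul, Matrix.det_mul, shear_det, shear_det, hL, hK,
      hKdet]; norm_num
  have hRtr : R.trace = 2 * Real.cos θ := by rw [hR, trace_shear_mul, htr]
  have hRb : R ^ b = Real.cos (m * Real.pi) • (1 : Matrix (Fin 2) (Fin 2) ℝ) := by
    have h1 := pow_of_trace_cos hRdet hRtr b
    rw [hbθ, Real.sin_sub, Real.sin_int_mul_pi, zero_smul, zero_mul, zero_sub, zero_sub, neg_smul,
      neg_neg, mul_comm, mul_smul] at h1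
    exact smul_right_injective _ hsin h1
  have hV₁q : ∀ n, V₁ (n + (q * b : ℕ)) = V₁ n := fun n => by
    rw [← per_mul hV₁per n b]; congr 1; push_cast; ring
  obtain ⟨L', hL', hT'⟩ := trM_pert E lam (q := q * b) (k := k) (by nlinarith) hk hV₁q
  set K' := stepM E (lam * V₁ 0) * stepM E 0 ^ (k - 1) with hK'
  have hKL' : K' * L' = Real.cos (m * Real.pi) • 1 := by
    have h1 := hT' 0 0
    rw [pert_zero, mul_zero, neg_zero, shear_zero, Matrix.one_mul, Matrix.mul_one] at h1
    rw [← h1, ← mul_assoc, trM_mul_per E (sievePot_per lam hk hV₁per), hV1, ← hR, hRb]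
  have htwo := trace_two_shears (hKdet _) hKL' ε₁ (-ε₁)
  refine ⟨pert V₁ (q * b) (-(ε₁ / lam)) (-(-ε₁ / lam)), q * b, by positivity, pert_per hV₁q _ _,
    fun n => ?_, ?_⟩
  · have h1 := hscale t ht
    have h3 := hscale s₀ hs₀
    have h4 := hscale ε₁ (abs_of_pos hε₁0).le
    have h5 := hscale (-ε₁) (by rw [abs_neg, abs_of_pos hε₁0])
    have h6 := pert_close V q (-(t / lam)) (-(s₀ / lam)) n
    have h7 := pert_close V₁ (q * b) (-(ε₁ / lam)) (-(-ε₁ / lam)) n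
    have h8 := abs_sub_le (pert V₁ (q * b) (-(ε₁ / lam)) (-(-ε₁ / lam)) n) (V₁ n) (V n)
    linarith
  · rw [← trM_trace E (sievePot_per lam hk (pert_per hV₁q _ _)) 1, hT', hscale', hscale', htwo,
      abs_mul, Real.abs_cos_int_mul_pi, one_mul, hK10]
    have : 0 < ε₁ ^ 2 * (stepM E 0 ^ (k - 1)) 0 0 ^ 2 := by positivity
    refine lt_of_lt_of_le ?_ (le_abs_self _)
    nlinarith

/-! ### Exceptional energies and finite boxes -/

/-- The Dirichlet energies of a free block of length `k` are finite in number: they are the roots of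
a polynomial that is nonzero at `E = 2`. -/
lemma exc_finite (k : ℕ) : {E : ℝ | (stepM E 0 ^ k) 0 0 = 0}.Finite := by
  let M : Matrix (Fin 2) (Fin 2) (Polynomial ℝ) := !![Polynomial.X, -1; 1, 0]
  have hM : ∀ E : ℝ, (Polynomial.evalRingHom E).mapMatrix (M ^ k) = stepM E 0 ^ k := by
    intro E
    rw [map_pow]
    congr 1
    ext i j
    fin_cases i <;> fin_cases j <;> simp [M, stepM]
  have hev : ∀ E : ℝ, ((M ^ k) 0 0).eval E = (stepM E 0 ^ k) 0 0 := by
    intro E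
    rw [← hM]; rfl
  have h2 : stepM 2 0 ^ k = !![(k : ℝ) + 1, -k; k, 1 - k] := by
    clear hM hev
    induction k with
    | zero => ext i j; fin_cases i <;> fin_cases j <;> simp
    | succ k ih =>
      rw [pow_succ, ih]
      ext i j
      fin_cases i <;> fin_cases j <;> simp [stepM, Matrix.mul_apply, Fin.sum_univ_two] <;> ring
  have hne : (M ^ k) 0 0 ≠ 0 := by
    intro h
    have h3 := hev 2
    rw [h, h2] at h3
    simp at h3
    have : (0 : ℝ) < k + 1 := by positivity
    linarith
  refine (Polynomial.finite_setOfPred_isRoot hne).subset fun E hE => ?_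
  have : (stepM E 0 ^ k) 0 0 = 0 := hE
  show Polynomial.IsRoot _ _
  rw [Polynomial.IsRoot, hev, this]

/-- Eigenvalues of a real symmetric matrix are close to its approximate eigenvalues. -/
lemma symm_approx_eigenvalue {n : Type*} [Fintype n] [DecidableEq n] {B : Matrix n n ℝ}
    (hB : B.IsHermitian) (E : ℝ) (x : EuclideanSpace ℝ n) (hx : x ≠ 0) :
    ∃ i, |E - hB.eigenvalues i| * ‖x‖ ≤ ‖Matrix.toEuclideanLin B x - E • x‖ := by
  by_contra! hcon
  set b := hB.eigenvectorBasis with hb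
  set y := Matrix.toEuclideanLin B x - E • x with hy
  have hcoord : ∀ i, b.repr y i = (hB.eigenvalues i - E) * b.repr x i := by
    intro i
    have hsym : inner ℝ (b i) (Matrix.toEuclideanLin B x)
        = inner ℝ (Matrix.toEuclideanLin B (b i)) x :=
      (Matrix.isSymmetric_toEuclideanLin_iff.2 hB (b i) x).symm
    have heig : Matrix.toEuclideanLin B (b i) = hB.eigenvalues i • b i := by
      ext j
      have := congrFun (hB.mulVec_eigenvectorBasis i) j
      simpa [Matrix.toEuclideanLin] using this
    rw [OrthonormalBasis.repr_apply_apply, OrthonormalBasis.repr_apply_apply, hy, inner_sub_right,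
      hsym, heig, inner_smul_left, inner_smul_right]
    simp; ring
  have hn : ∀ z : EuclideanSpace ℝ n, ‖z‖ ^ 2 = ∑ i, (b.repr z i) ^ 2 := by
    intro z
    rw [← b.repr.norm_map z, EuclideanSpace.norm_sq_eq]; simp
  have hx0 : 0 < ‖x‖ := norm_pos_iff.2 hx
  set d := ‖y‖ / ‖x‖ with hd
  have hcon' : ∀ i, d ^ 2 < (hB.eigenvalues i - E) ^ 2 := by
    intro i
    rw [sq_lt_sq, abs_of_nonneg (by positivity), hd, div_lt_iff₀ hx0, abs_sub_comm]
    exact hcon i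
  have hlt : ∑ i, d ^ 2 * (b.repr x i) ^ 2 < ∑ i, (b.repr y i) ^ 2 := by
    apply Finset.sum_lt_sum
    · intro i _
      rw [hcoord, mul_pow]
      exact mul_le_mul_of_nonneg_right (hcon' i).le (sq_nonneg _)
    · by_contra! h
      apply hx
      apply b.repr.injective
      ext i
      have h1 := h i (Finset.mem_univ i)
      rw [hcoord, mul_pow] at h1
      have h2 : (b.repr x i) ^ 2 = 0 := by
        nlinarith [hcon' i, sq_nonneg (b.repr x i)]
      simpa using h2
  rw [← Finset.mul_sum, ← hn, ← hn, hd, div_pow, div_mul_cancel₀ _ (by positivity)] at hlt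
  exact lt_irrefl _ hlt

/-- Restriction of `H_W` to the `P + 1` sites following `c`, with zero boundary condition. -/
def boxM (W : ℤ → ℝ) (c : ℤ) (P : ℕ) : Matrix (Fin (P + 1)) (Fin (P + 1)) ℝ := fun i j =>
  (if (j : ℕ) = i + 1 then 1 else 0) + (if (i : ℕ) = j + 1 then 1 else 0)
    + (if i = j then W (c + 1 + (i : ℕ)) else 0)

lemma boxM_herm (W : ℤ → ℝ) (c : ℤ) (P : ℕ) : (boxM W c P).IsHermitian := by
  ext i j
  rw [Matrix.conjTranspose_apply]
  simp only [boxM, star_trivial]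
  rcases eq_or_ne i j with rfl | h
  · ring
  · rw [if_neg h, if_neg h.symm]; ring

/-- On a solution, the box operator acts as multiplication by `E` up to the boundary values. -/
lemma boxM_apply {W : ℤ → ℝ} {c : ℤ} {P : ℕ} {E : ℝ} {f : ℤ → ℝ}
    (hf : ∀ n, c + 1 ≤ n → n ≤ c + P + 1 → SolAt W E f n) (i : Fin (P + 1)) :
    ∑ j, boxM W c P i j * f (c + 1 + (j : ℕ)) - E * f (c + 1 + (i : ℕ))
      = (if i = Fin.last P then -f (c + P + 2) else 0) + (if i = 0 then - f c else 0) := by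
  have h1 : ∑ j : Fin (P + 1), (if (j : ℕ) = i + 1 then (1 : ℝ) else 0) * f (c + 1 + (j : ℕ))
      = f (c + 1 + (i : ℕ) + 1) + if i = Fin.last P then -f (c + P + 2) else 0 := by
    by_cases hi : i = Fin.last P
    · rw [if_pos hi, Finset.sum_eq_zero]
      · subst hi
        simp only [Fin.val_last]
        have : c + 1 + (P : ℤ) + 1 = c + P + 2 := by ring
        rw [this]; ring
      · intro j _
        rw [if_neg, zero_mul]
        subst hi
        simp only [Fin.val_last]
        have := j.2; omega
    · have hlt : (i : ℕ) + 1 < P + 1 := by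
        have := i.2
        have h' : (i : ℕ) ≠ P := fun h => hi (Fin.ext h)
        omega
      rw [if_neg hi, Finset.sum_eq_single ⟨(i : ℕ) + 1, hlt⟩]
      · simp [add_assoc]
      · intro j _ hj
        rw [if_neg, zero_mul]
        intro h; exact hj (Fin.ext h)
      · simp
  have h2 : ∑ j : Fin (P + 1), (if (i : ℕ) = j + 1 then (1 : ℝ) else 0) * f (c + 1 + (j : ℕ))
      = f (c + 1 + (i : ℕ) - 1) + if i = 0 then -f c else 0 := by
    by_cases hi : i = 0
    · rw [if_pos hi, Finset.sum_eq_zero]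
      · subst hi; simp
      · intro j _
        subst hi
        simp
    · have hlt : (i : ℕ) - 1 < P + 1 := by
        have := i.2; omega
      have hpos : 0 < (i : ℕ) := Nat.pos_of_ne_zero fun h => hi (Fin.ext h)
      rw [if_neg hi, Finset.sum_eq_single ⟨(i : ℕ) - 1, hlt⟩]
      · have e : c + 1 + ((i : ℕ) : ℤ) - 1 = c + 1 + (((i : ℕ) - 1 : ℕ) : ℤ) := by
          push_cast [hpos]; omega
        rw [e, if_pos (by simp; omega)]; simp
      · intro j _ hj
        rw [if_neg, zero_mul]
        intro h; exact hj (Fin.ext (by simp; omega))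
      · simp
  have h3 : ∑ j : Fin (P + 1), (if i = j then W (c + 1 + (i : ℕ)) else 0) * f (c + 1 + (j : ℕ))
      = W (c + 1 + (i : ℕ)) * f (c + 1 + (i : ℕ)) := by
    rw [Finset.sum_eq_single i]
    · simp
    · intro j _ hj; rw [if_neg hj.symm, zero_mul]
    · simp
  simp only [boxM, add_mul, Finset.sum_add_distrib]
  rw [h1, h2, h3]
  have := hf (c + 1 + (i : ℕ)) (by omega) (by have := i.2; omega)
  unfold SolAt at this
  linear_combination this

/-- An exact solution that is small at both ends of a box forces an eigenvalue of the box to be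
close to the energy. -/
lemma box_eigenvalue (W : ℤ → ℝ) (c : ℤ) (P : ℕ) : ∃ μ : Fin (P + 1) → ℝ, ∀ (E κ : ℝ) (f : ℤ → ℝ),
    (∀ n, c + 1 ≤ n → n ≤ c + P + 1 → SolAt W E f n) → |f c| ≤ κ → |f (c + P + 2)| ≤ κ →
    ∀ x, c + 1 ≤ x → x ≤ c + P + 1 → f x ≠ 0 → ∃ i, |E - μ i| * |f x| ≤ 2 * κ := by
  refine ⟨(boxM_herm W c P).eigenvalues, fun E κ f hf hc hP x hx1 hx2 hx0 => ?_⟩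
  obtain ⟨m, rfl⟩ : ∃ m : ℕ, x = c + 1 + m := ⟨(x - c - 1).toNat, by omega⟩
  have hm : m < P + 1 := by omega
  set y : EuclideanSpace ℝ (Fin (P + 1)) := WithLp.toLp 2 fun j => f (c + 1 + (j : ℕ)) with hy
  have hym : y ⟨m, hm⟩ = f (c + 1 + m) := rfl
  have hle : |f (c + 1 + m)| ≤ ‖y‖ := by
    rw [← hym]; exact PiLp.norm_apply_le y ⟨m, hm⟩
  have hy0 : y ≠ 0 := by
    intro h; rw [h] at hym; exact hx0 (by rw [← hym]; rfl)
  obtain ⟨i, hi⟩ := symm_approx_eigenvalue (boxM_herm W c P) E y hy0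
  refine ⟨i, (mul_le_mul_of_nonneg_left hle (abs_nonneg _)).trans (hi.trans ?_)⟩
  have heq : Matrix.toEuclideanLin (boxM W c P) y - E • y
      = EuclideanSpace.single (Fin.last P) (-f (c + P + 2)) + EuclideanSpace.single 0 (-f c) := by
    ext j
    have := boxM_apply hf j
    simp only [Matrix.toEuclideanLin, PiLp.sub_apply, PiLp.smul_apply, PiLp.add_apply, smul_eq_mul,
      EuclideanSpace.single_apply]
    rw [← this]
    rfl
  rw [heq]
  refine (norm_add_le _ _).trans ?_
  simp only [EuclideanSpace.norm_single, Real.norm_eq_abs, abs_neg]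
  linarith

/-! ### Concatenation of periodic potentials -/

/-- Concatenation: `W 0, W 1, …, W (m - 1)` are repeated cyclically, each on a stretch of
length `L`. -/
def conc {m : ℕ} [NeZero m] (W : Fin m → ℤ → ℝ) (L : ℕ) : ℤ → ℝ := fun x =>
  W (Fin.ofNat m ((x / L) % m).toNat) x

lemma conc_per {m : ℕ} [NeZero m] {W : Fin m → ℤ → ℝ} {L : ℕ} (hL : 0 < L)
    (hW : ∀ j n, W j (n + L) = W j n) (n : ℤ) :
    conc W L (n + (m * L : ℕ)) = conc W L n := by
  have hL' : (L : ℤ) ≠ 0 := by exact_mod_cast hL.ne'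
  simp only [conc]
  have h1 : (n + ((m * L : ℕ) : ℤ)) / L = n / L + m := by
    push_cast
    rw [Int.add_mul_ediv_right _ _ hL']
  have h2 : ∀ j, W j (n + ((m * L : ℕ) : ℤ)) = W j n := fun j => by
    have := per_mul (hW j) n m
    rw [← this]; push_cast; rfl
  rw [h1, h2, Int.add_emod_right]

lemma conc_eq {m : ℕ} [NeZero m] (W : Fin m → ℤ → ℝ) {L : ℕ} {s x : ℤ} {j : Fin m}
    (hs : s % m = (j : ℕ)) (h1 : s * L ≤ x) (h2 : x < (s + 1) * L) : conc W L x = W j x := by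
  have hL : (0 : ℤ) < L := by nlinarith
  have : x / L = s := by
    rw [Int.ediv_eq_iff_of_pos hL]
    constructor <;> linarith
  simp only [conc, this, hs]
  congr 1
  simp

lemma sievePot_eq {V V' : ℤ → ℝ} (lam : ℝ) {k : ℕ} (hk : 0 < k) {a b : ℤ}
    (h : ∀ x, a ≤ x → x < b → V x = V' x) {n : ℤ} (h1 : k * a ≤ n) (h2 : n < k * b) :
    sievePot lam V k n = sievePot lam V' k n := by
  simp only [sievePot, sieve]
  have hk' : (0 : ℤ) < k := by exact_mod_cast hk
  split_ifs with hd
  · obtain ⟨c, rfl⟩ := hd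
    rw [Int.mul_ediv_cancel_left _ hk'.ne', h c (le_of_mul_le_mul_left h1 hk')
      (lt_of_mul_lt_mul_left h2 hk'.le)]
  · rfl

/-- Inside each stretch of the concatenated potential a bounded solution decays towards the
middle of the stretch, if the energy is in a gap of the corresponding periodic potential. -/
lemma conc_decay {m k D : ℕ} [NeZero m] (hk : 0 < k) (hD : 0 < D) {W : Fin m → ℤ → ℝ}
    {pd : Fin m → ℕ} (hpd : ∀ j, pd j ≤ D) (hW : ∀ j n, W j (n + pd j) = W j n)
    (i : ℕ) {lam E τ₀ S : ℝ} (hτ₀ : 0 < τ₀) {j : Fin m}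
    (hj : τ₀ ≤ |disc E (sievePot lam (W j) k) (k * pd j)|) {f : ℤ → ℝ} (hS : ∀ n, |f n| ≤ S)
    (hf : ∀ n, SolAt (sievePot lam (conc W (D * (2 * i + 1))) k) E f n) {s : ℤ}
    (hs : s % m = (j : ℕ)) {n : ℤ}
    (h1 : k * (s * (D * (2 * i + 1)) + D * i) ≤ n)
    (h2 : n ≤ k * (s * (D * (2 * i + 1)) + D * i) + 1) :
    |f n| ≤ (2 / τ₀) ^ i * S := by
  have hsol : ∀ n, k * (s * (D * (2 * i + 1) : ℕ)) ≤ n → n < k * ((s + 1) * (D * (2 * i + 1) : ℕ)) →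
      SolAt (sievePot lam (W j) k) E f n := by
    intro n hn1 hn2
    have := hf n
    unfold SolAt at this ⊢
    rwa [sievePot_eq lam hk (fun x hx1 hx2 => conc_eq W hs hx1 hx2) hn1 hn2] at this
  have hkp : (k : ℤ) * pd j ≤ k * D := by
    have := hpd j; gcongr
  have hkp0 : (0 : ℤ) ≤ k * pd j := by positivity
  have hkD : (1 : ℤ) ≤ k * D := by exact_mod_cast Nat.mul_pos hk hD
  have hikp : (i : ℤ) * (k * pd j) ≤ i * (k * D) := by gcongr
  refine decay (p := (k * pd j : ℕ)) (a := k * (s * (D * (2 * i + 1) : ℕ)))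
    (b := k * ((s + 1) * (D * (2 * i + 1) : ℕ))) hS hτ₀ hj (by positivity) ?_ i n ?_ ?_
  · intro n hn1 hn2
    exact three_term (sievePot_per lam hk (hW j)) fun x hx1 hx2 =>
      hsol x (hn1.trans hx1) (hx2.trans_le hn2)
  · push_cast; linarith
  · push_cast; linarith

/-- A nonzero bounded sequence nearly attains its supremum. -/
lemma exists_half_sup {f : ℤ → ℝ} (h0 : ∃ n, f n ≠ 0) (hC : ∃ C, ∀ n, |f n| ≤ C) :
    ∃ S, 0 < S ∧ (∀ n, |f n| ≤ S) ∧ ∃ x, S / 2 ≤ |f x| := by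
  obtain ⟨n, hn⟩ := h0
  obtain ⟨C, hC⟩ := hC
  have hb : BddAbove (range fun n => |f n|) := ⟨C, by rintro _ ⟨n, rfl⟩; exact hC n⟩
  have hle : ∀ n, |f n| ≤ ⨆ n, |f n| := fun n => le_ciSup hb n
  have hpos : 0 < ⨆ n, |f n| := (abs_pos.2 hn).trans_le (hle n)
  refine ⟨_, hpos, hle, ?_⟩
  obtain ⟨x, hx⟩ := exists_lt_of_lt_ciSup (half_lt_self hpos)
  exact ⟨x, hx.le⟩

/-- The spectrum of the concatenated potential is exponentially close, in the length of the
stretches, to a set of linearly many points. -/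
lemma conc_spectrum {m k D : ℕ} [NeZero m] (hk : 0 < k) (hD : 0 < D) {W : Fin m → ℤ → ℝ}
    {pd : Fin m → ℕ} (hpd : ∀ j, pd j ∣ D) (hW : ∀ j n, W j (n + pd j) = W j n)
    (i : ℕ) (lam : ℝ) :
    ∃ μ : Fin m × Fin (k * (m * (D * (2 * i + 1)))) → ℝ,
      ∀ E ∈ SchrodingerSpectrum (sievePot lam (conc W (D * (2 * i + 1))) k), ∀ τ₀ : ℝ, 0 < τ₀ →
        (∃ j, τ₀ ≤ |disc E (sievePot lam (W j) k) (k * pd j)|) →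
          ∃ z, |E - μ z| ≤ 4 * (2 / τ₀) ^ i := by
  have hm : 0 < m := Nat.pos_of_ne_zero (NeZero.ne m)
  set L := D * (2 * i + 1) with hL
  have hL0 : 0 < L := by positivity
  have hWL : ∀ j n, W j (n + L) = W j n := fun j n => by
    obtain ⟨c, hc⟩ := hpd j
    have := per_mul (hW j) n (c * (2 * i + 1))
    rw [← this, hL, hc]; push_cast; congr 1; ring
  set Q := conc W L with hQ
  obtain ⟨P, hP⟩ : ∃ P, k * (m * L) = P + 1 := ⟨k * (m * L) - 1, by
    have : 0 < k * (m * L) := by positivity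
    omega⟩
  have hPz : (k : ℤ) * (m * L) = P + 1 := by exact_mod_cast hP
  have hper : ∀ n, sievePot lam Q k (n + (k * (m * L) : ℕ)) = sievePot lam Q k n :=
    sievePot_per lam hk (conc_per hL0 hWL)
  choose μ hμ using fun j : Fin m =>
    box_eigenvalue (sievePot lam Q k) (k * ((j : ℕ) * (D * (2 * i + 1)) + D * i)) P
  rw [hP]
  refine ⟨fun z => μ z.1 z.2, fun E hE τ₀ hτ₀ ⟨j, hj⟩ => ?_⟩
  obtain ⟨f, hf0, hfC, hf⟩ := exists_bounded_solution (by positivity) hper hE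
  obtain ⟨S, hS0, hS, x, hx⟩ := exists_half_sup hf0 hfC
  set c : ℤ := k * ((j : ℕ) * (D * (2 * i + 1)) + D * i) with hc
  -- translate by a multiple of the period so that `x` falls into the box
  set t := (x - c - 1) / ((P : ℤ) + 1) with ht
  set y := (x - c - 1) % ((P : ℤ) + 1) with hy
  have hPpos : (0 : ℤ) < (P : ℤ) + 1 := by positivity
  have hy0 : 0 ≤ y := Int.emod_nonneg _ hPpos.ne'
  have hy1 : y < (P : ℤ) + 1 := Int.emod_lt_of_pos _ hPpos
  have hxy : c + 1 + y + t * ((P : ℤ) + 1) = x := by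
    have := Int.emod_add_mul_ediv (x - c - 1) ((P : ℤ) + 1)
    rw [← ht, ← hy] at this; linarith
  set g : ℤ → ℝ := fun n => f (n + t * ((P : ℤ) + 1)) with hg
  have hgS : ∀ n, |g n| ≤ S := fun n => hS _
  have hgsol : ∀ n, SolAt (sievePot lam Q k) E g n := fun n => by
    have h1 := hf (n + t * ((P : ℤ) + 1))
    have h2 := per_mul hper n t
    have h3 : (((k * (m * L) : ℕ)) : ℤ) = (P : ℤ) + 1 := by rw [hP]; push_cast; rfl
    rw [h3] at h2
    unfold SolAt at h1 ⊢
    rw [h2] at h1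
    simp only [hg]
    rw [← h1]
    congr 3 <;> ring
  have hgx : S / 2 ≤ |g (c + 1 + y)| := by simp only [hg, hxy]; exact hx
  have hdec := fun (s : ℤ) (hs : s % m = (j : ℕ)) (n : ℤ) h1 h2 =>
    conc_decay hk hD (fun j => Nat.le_of_dvd hD (hpd j)) hW i hτ₀ hj hgS hgsol hs (n := n) h1 h2
  have hjm : ((j : ℕ) : ℤ) % m = (j : ℕ) := Int.emod_eq_of_lt (by positivity) (by exact_mod_cast j.2)
  have e1 : |g c| ≤ (2 / τ₀) ^ i * S := hdec (j : ℕ) hjm c (by rw [hc]) (by rw [hc]; linarith)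
  have e2 : |g (c + P + 2)| ≤ (2 / τ₀) ^ i * S := by
    have e : c + P + 2 = k * (((j : ℕ) + m) * (D * (2 * i + 1)) + D * i) + 1 := by
      have : (L : ℤ) = D * (2 * i + 1) := by rw [hL]; push_cast; ring
      rw [this] at hPz
      rw [hc]; linarith
    exact hdec ((j : ℕ) + m) (by rw [Int.add_emod_right, hjm]) _ (by rw [e]; linarith) (by rw [e])
  obtain ⟨z, hz⟩ := hμ j E _ g (fun n _ _ => hgsol n) e1 e2 (c + 1 + y) (by linarith) (by linarith)
    (by intro h; rw [h, abs_zero] at hgx; linarith)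
  refine ⟨(j, z), ?_⟩
  have h3 : |E - μ j z| * (S / 2) ≤ 2 * ((2 / τ₀) ^ i * S) :=
    (mul_le_mul_of_nonneg_left hgx (abs_nonneg _)).trans hz
  have h4 : |E - μ j z| * S ≤ (4 * (2 / τ₀) ^ i) * S := by linarith
  exact le_of_mul_le_mul_right h4 hS0

/-! ### Small covers of the spectrum -/

lemma trM_continuous (V : ℤ → ℝ) (k : ℕ) (n : ℤ) (j : ℕ) :
    Continuous fun y : ℝ × ℝ => trM y.2 (sievePot y.1 V k) n j := by
  induction j with
  | zero => simp only [trM]; exact continuous_const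
  | succ j ih =>
    simp only [trM]
    refine Continuous.matrix_mul ?_ ih
    refine continuous_matrix fun a b => ?_
    fin_cases a <;> fin_cases b <;> simp [stepM, sievePot] <;> fun_prop

lemma disc_continuous (V : ℤ → ℝ) (k p : ℕ) :
    Continuous fun y : ℝ × ℝ => disc y.2 (sievePot y.1 V k) p :=
  (trM_continuous V k 0 p).matrix_trace

/-- Over a compact set of couplings and energies avoiding the exceptional energies, finitely many
periodic perturbations suffice to put every energy in a uniformly open gap. -/
lemma finite_gap_family {V : ℤ → ℝ} {q k : ℕ} (hq : 0 < q) (hk : 0 < k)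
    (hV : ∀ n, V (n + q) = V n) {ε : ℝ} (hε : 0 < ε) {K : Set (ℝ × ℝ)} (hK : IsCompact K)
    (hK0 : ∀ y ∈ K, y.1 ≠ 0 ∧ (stepM y.2 0 ^ (k - 1)) 0 0 ≠ 0) :
    ∃ (ι : Type) (_ : Fintype ι) (_ : Nonempty ι) (W : ι → ℤ → ℝ) (pd : ι → ℕ) (τ : ℝ),
      2 < τ ∧ (∀ j, 0 < pd j) ∧ (∀ j n, W j (n + pd j) = W j n) ∧
      (∀ j n, |W j n - V n| ≤ ε) ∧
      ∀ y ∈ K, ∃ j, τ ≤ |disc y.2 (sievePot y.1 (W j) k) (k * pd j)| := by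
  refine hK.induction_on (p := fun K => ∃ (ι : Type) (_ : Fintype ι) (_ : Nonempty ι)
      (W : ι → ℤ → ℝ) (pd : ι → ℕ) (τ : ℝ),
      2 < τ ∧ (∀ j, 0 < pd j) ∧ (∀ j n, W j (n + pd j) = W j n) ∧
      (∀ j n, |W j n - V n| ≤ ε) ∧
      ∀ y ∈ K, ∃ j, τ ≤ |disc y.2 (sievePot y.1 (W j) k) (k * pd j)|) ?_ ?_ ?_ ?_
  · exact ⟨Unit, inferInstance, inferInstance, fun _ => V, fun _ => q, 3, by norm_num, fun _ => hq,
      fun _ => hV, fun _ n => by simpa using hε.le, fun y hy => hy.elim⟩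
  · rintro s t hst ⟨ι, h1, h2, W, pd, τ, hτ, h3, h4, h5, h6⟩
    exact ⟨ι, h1, h2, W, pd, τ, hτ, h3, h4, h5, fun y hy => h6 y (hst hy)⟩
  · rintro s t ⟨ι, h1, h2, W, pd, τ, hτ, h3, h4, h5, h6⟩ ⟨ι', h1', h2', W', pd', τ', hτ', h3', h4', h5', h6'⟩
    refine ⟨ι ⊕ ι', inferInstance, inferInstance, Sum.elim W W', Sum.elim pd pd', min τ τ',
      lt_min hτ hτ', ?_, ?_, ?_, ?_⟩
    · rintro (j | j) <;> simp [h3, h3']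
    · rintro (j | j) n <;> simp [h4, h4']
    · rintro (j | j) n <;> simp [h5, h5']
    · rintro y (hy | hy)
      · obtain ⟨j, hj⟩ := h6 y hy
        exact ⟨Sum.inl j, (min_le_left _ _).trans hj⟩
      · obtain ⟨j, hj⟩ := h6' y hy
        exact ⟨Sum.inr j, (min_le_right _ _).trans hj⟩
  · intro y hy
    obtain ⟨h1, h2⟩ := hK0 y hy
    obtain ⟨V', p, hp, hper, hclose, hd⟩ := gap_opening hq hk hV hε h1 h2
    obtain ⟨τ, hτ1, hτ2⟩ := exists_between hd
    refine ⟨{y | τ < |disc y.2 (sievePot y.1 V' k) (k * p)|}, ?_, ?_⟩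
    · apply mem_nhdsWithin_of_mem_nhds
      exact (isOpen_lt continuous_const (disc_continuous V' k (k * p)).abs).mem_nhds hτ2
    · exact ⟨Unit, inferInstance, inferInstance, fun _ => V', fun _ => p, τ, hτ1, fun _ => hp,
        fun _ => hper, fun _ => hclose, fun y hy => ⟨(), le_of_lt hy⟩⟩

/-- An a priori bound on the spectrum, read off from a bounded solution near its supremum. -/
lemma spectrum_bound_per {W : ℤ → ℝ} {p : ℕ} (hp : 0 < p) (hW : ∀ n, W (n + p) = W n) {C : ℝ}
    (hC : ∀ n, |W n| ≤ C) {E : ℝ} (hE : E ∈ SchrodingerSpectrum W) : |E| ≤ 4 + C := by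
  obtain ⟨f, hf0, hfC, hf⟩ := exists_bounded_solution hp hW hE
  obtain ⟨S, hS0, hS, x, hx⟩ := exists_half_sup hf0 hfC
  have h1 := hf x
  unfold SolAt at h1
  have h2 : E * f x = f (x - 1) + f (x + 1) + W x * f x := by linarith
  have h3 : |E| * |f x| ≤ (4 + C) * |f x| := by
    rw [← abs_mul, h2]
    refine (abs_add_three _ _ _).trans ?_
    rw [abs_mul]
    have := mul_le_mul_of_nonneg_right (hC x) (abs_nonneg (f x))
    linarith [hS (x - 1), hS (x + 1)]
  exact le_of_mul_le_mul_right h3 (by linarith)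

lemma sievePot_bound {V : ℤ → ℝ} {C : ℝ} (hC0 : 0 ≤ C) (hC : ∀ n, |V n| ≤ C) (lam : ℝ) (k : ℕ)
    (n : ℤ) : |sievePot lam V k n| ≤ |lam| * C := by
  simp only [sievePot, sieve, abs_mul]
  gcongr
  split_ifs
  · exact hC _
  · simpa using hC0

lemma sievePot_close {V V' : ℤ → ℝ} {r : ℝ} (hr : 0 ≤ r) (h : ∀ n, |V n - V' n| ≤ r) (lam : ℝ)
    (k : ℕ) (n : ℤ) : |sievePot lam V k n - sievePot lam V' k n| ≤ |lam| * r := by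
  simp only [sievePot, sieve, ← mul_sub, abs_mul]
  gcongr
  split_ifs
  · exact h _
  · simpa using hr

/-- `s` is covered by finitely many intervals of lengths `2 d i` with `∑ (2 d i)^(1/N) ≤ 1/N`. -/
def SmallCover (N : ℕ) (s : Set ℝ) : Prop :=
  ∃ (ι : Type) (_ : Fintype ι) (x d : ι → ℝ), (∀ i, 0 ≤ d i) ∧
    (s ⊆ ⋃ i, Metric.closedBall (x i) (d i)) ∧ ∑ i, (2 * d i) ^ (1 / (N : ℝ)) ≤ 1 / N

lemma exists_small_eta (A : ℝ) {e δ : ℝ} (he : 0 < e) (hδ : 0 < δ) :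
    ∃ η, 0 < η ∧ A * (4 * η) ^ e ≤ δ := by
  have hc : Filter.Tendsto (fun η : ℝ => A * (4 * η) ^ e) (nhdsWithin 0 (Ioi 0)) (nhds 0) := by
    have : ContinuousAt (fun η : ℝ => A * (4 * η) ^ e) 0 := by
      refine ContinuousAt.mul continuousAt_const ?_
      exact (continuousAt_const.mul continuousAt_id).rpow_const (Or.inr he.le)
    have h := this.tendsto
    simp only [mul_zero, Real.zero_rpow he.ne'] at h
    exact h.mono_left nhdsWithin_le_nhds
  have h1 := (hc.eventually (ge_mem_nhds hδ)).and self_mem_nhdsWithin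
  obtain ⟨η, h2, h3⟩ := h1.exists
  exact ⟨η, h3, h2⟩

lemma exists_large_i (A : ℝ) {e δ ρ : ℝ} (he : 0 < e) (hδ : 0 < δ) (hρ0 : 0 < ρ) (hρ : ρ < 1) :
    ∃ i : ℕ, A * (2 * i + 1) * (10 * ρ ^ i) ^ e ≤ δ := by
  have hs0 : 0 ≤ ρ ^ e := by positivity
  have hs1 : ρ ^ e < 1 := Real.rpow_lt_one hρ0.le hρ he
  have h1 := tendsto_self_mul_const_pow_of_lt_one hs0 hs1
  have h2 := tendsto_pow_atTop_nhds_zero_of_lt_one hs0 hs1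
  have h3 := ((h1.const_mul 2).add h2).const_mul (A * 10 ^ e)
  simp only [mul_zero, add_zero] at h3
  obtain ⟨i, hi⟩ := (h3.eventually (ge_mem_nhds hδ)).exists
  refine ⟨i, le_trans (le_of_eq ?_) hi⟩
  rw [Real.mul_rpow (by norm_num) (by positivity), ← Real.rpow_natCast_mul hρ0.le,
    ← Real.rpow_mul_natCast hρ0.le, mul_comm (i : ℝ) e]
  ring

/-- Every periodic potential has nearby periodic potentials all of whose neighbours have small
spectrum, uniformly in the coupling. -/
lemma exists_good {V : ℤ → ℝ} {q k N : ℕ} (hq : 0 < q) (hk : 0 < k) (hN : 0 < N)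
    (hV : ∀ n, V (n + q) = V n) {ε : ℝ} (hε : 0 < ε) :
    ∃ (Q : ℤ → ℝ) (p : ℕ), 0 < p ∧ (∀ n, Q (n + p) = Q n) ∧ (∀ n, |Q n - V n| ≤ ε) ∧
      ∃ r > 0, ∀ V' : ℤ → ℝ, (∀ n, |V' n - Q n| ≤ r) → ∀ lam : ℝ, 1 / (N : ℝ) ≤ |lam| →
        |lam| ≤ N → SmallCover N (SchrodingerSpectrum (sievePot lam V' k)) := by
  have hN0 : (0 : ℝ) < N := by exact_mod_cast hN
  have he : (0 : ℝ) < 1 / N := by positivity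
  obtain ⟨C, hC⟩ := per_bounded hq hV
  have hC0 : 0 ≤ C := (abs_nonneg _).trans (hC 0)
  set Z := (exc_finite (k - 1)).toFinset with hZ
  obtain ⟨η, hη0, hη⟩ := exists_small_eta (Z.card : ℝ) he (half_pos he)
  -- `R` bounds all spectra involved; `K` is the set of couplings and energies to be treated
  set R := 4 + N * (C + ε) with hR
  set K : Set (ℝ × ℝ) := (Icc (-(N : ℝ)) N ×ˢ Icc (-R) R) ∩
    ({y | 1 / (N : ℝ) ≤ |y.1|} ∩ ⋂ z ∈ Z, {y : ℝ × ℝ | η ≤ |y.2 - z|}) with hKdef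
  have hK : IsCompact K := by
    refine (isCompact_Icc.prod isCompact_Icc).inter_right (IsClosed.inter ?_ ?_)
    · exact isClosed_le continuous_const (by fun_prop)
    · exact isClosed_biInter fun z _ => isClosed_le continuous_const (by fun_prop)
  have hK0 : ∀ y ∈ K, y.1 ≠ 0 ∧ (stepM y.2 0 ^ (k - 1)) 0 0 ≠ 0 := by
    rintro y ⟨-, hy1, hy2⟩
    refine ⟨?_, fun h => ?_⟩
    · rw [← abs_pos]; exact he.trans_le hy1
    · have hyZ : y.2 ∈ Z := by rw [hZ, Set.Finite.mem_toFinset]; exact h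
      have : η ≤ |y.2 - y.2| := mem_iInter₂.1 hy2 _ hyZ
      rw [sub_self, abs_zero] at this
      linarith
  obtain ⟨ι, _, _, W₀, pd₀, τ, hτ, hpd0, hW0, hclose0, hgap0⟩ :=
    finite_gap_family hq hk hV hε hK hK0
  set m := Fintype.card ι with hm
  have : NeZero m := ⟨Fintype.card_ne_zero⟩
  set e := (Fintype.equivFin ι).symm with heq
  set W : Fin m → ℤ → ℝ := fun j => W₀ (e j) with hWdef
  set pd : Fin m → ℕ := fun j => pd₀ (e j) with hpddef
  set D := ∏ j, pd j with hDdef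
  have hD : 0 < D := Finset.prod_pos fun j _ => hpd0 _
  have hpd : ∀ j, pd j ∣ D := fun j => Finset.dvd_prod_of_mem _ (Finset.mem_univ j)
  have hW : ∀ j n, W j (n + pd j) = W j n := fun j n => hW0 _ _
  have hgap : ∀ y ∈ K, ∃ j, τ ≤ |disc y.2 (sievePot y.1 (W j) k) (k * pd j)| := fun y hy => by
    obtain ⟨j, hj⟩ := hgap0 y hy
    refine ⟨e.symm j, ?_⟩
    simp only [hWdef, hpddef, Equiv.apply_symm_apply]; exact hj
  have hτ0 : 0 < τ := by linarith
  set ρ := 2 / τ with hρdef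
  have hρ0 : 0 < ρ := by positivity
  have hρ1 : ρ < 1 := by rw [hρdef, div_lt_one hτ0]; exact hτ
  obtain ⟨i, hi⟩ := exists_large_i ((m : ℝ) * (k * (m * D))) he (half_pos he) hρ0 hρ1
  set L := D * (2 * i + 1) with hLdef
  have hL0 : 0 < L := by positivity
  have hWL : ∀ j n, W j (n + L) = W j n := fun j n => by
    obtain ⟨c, hc⟩ := hpd j
    have := per_mul (hW j) n (c * (2 * i + 1))
    rw [← this, hLdef, hc]; push_cast; congr 1; ring
  have hm0 : 0 < m := Fintype.card_pos
  -- `2 β` bounds the displacement of the spectrum under the perturbations allowed at the end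
  set β := min η (ρ ^ i) / 2 with hβ
  have hβ0 : 0 < β := by have := pow_pos hρ0 i; positivity
  have hβ1 : 2 * β ≤ η := by rw [hβ]; linarith [min_le_left η (ρ ^ i)]
  have hβ2 : 2 * β ≤ ρ ^ i := by rw [hβ]; linarith [min_le_right η (ρ ^ i)]
  set Q := conc W L with hQ
  have hQclose : ∀ n, |Q n - V n| ≤ ε := fun n => hclose0 _ n
  have hQper : ∀ n, Q (n + (m * L : ℕ)) = Q n := conc_per hL0 hWL
  have hQb : ∀ n, |Q n| ≤ C + ε := fun n => by
    have := abs_add_le (Q n - V n) (V n)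
    rw [sub_add_cancel] at this
    linarith [hQclose n, hC n]
  refine ⟨Q, m * L, by positivity, hQper, hQclose, β / N, by positivity, ?_⟩
  intro V' hV' lam hl1 hl2
  have hV'b : ∀ n, |V' n| ≤ C + ε + β / N := fun n => by
    have := abs_add_le (V' n - Q n) (Q n)
    rw [sub_add_cancel] at this
    linarith [hV' n, hQb n]
  obtain ⟨μ, hμ⟩ := conc_spectrum (m := m) hk hD hpd hW i lam
  refine ⟨Z ⊕ (Fin m × Fin (k * (m * (D * (2 * i + 1))))), inferInstance,
    Sum.elim (fun z => (z : ℝ)) μ, Sum.elim (fun _ => 2 * η) (fun _ => 5 * ρ ^ i), ?_, ?_, ?_⟩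
  · rintro (z | z)
    · simp only [Sum.elim_inl]; positivity
    · simp only [Sum.elim_inr]; positivity
  · intro E hE
    obtain ⟨E', hE', hEE⟩ := spectrum_perturb (W := sievePot lam Q k) (δ := β)
      (sievePot_bound (by positivity) hQb lam k) (sievePot_bound (by positivity) hV'b lam k)
      (sievePot_close (r := β / N) (by positivity) (fun n => by rw [abs_sub_comm]; exact hV' n)
        lam k) hβ0 hE
    have hd : |E' - E| ≤ 2 * β := by
      have : |lam| * (β / N) ≤ β := by
        calc |lam| * (β / N) ≤ N * (β / N) := by gcongr
          _ = β := by field_simp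
      linarith
    rw [mem_iUnion]
    by_cases hex : ∃ z ∈ Z, |E' - z| < η
    · obtain ⟨z, hz, hzη⟩ := hex
      refine ⟨Sum.inl ⟨z, hz⟩, ?_⟩
      simp only [Sum.elim_inl, Metric.mem_closedBall, Real.dist_eq]
      have := abs_sub_le E E' z
      rw [abs_sub_comm E E'] at this
      linarith
    · push Not at hex
      have hER : |E'| ≤ R := by
        have := spectrum_bound_per (W := sievePot lam Q k) (by positivity)
          (sievePot_per lam hk hQper) (sievePot_bound (by positivity) hQb lam k) hE'
        refine this.trans ?_
        rw [hR]; gcongr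
      have hyK : (lam, E') ∈ K :=
        ⟨⟨abs_le.1 hl2, abs_le.1 hER⟩, hl1, mem_iInter₂.2 fun z hz => hex z hz⟩
      obtain ⟨z, hz⟩ := hμ E' hE' τ hτ0 (hgap _ hyK)
      refine ⟨Sum.inr z, ?_⟩
      simp only [Sum.elim_inr, Metric.mem_closedBall, Real.dist_eq]
      have := abs_sub_le E E' (μ z)
      rw [abs_sub_comm E E'] at this
      linarith
  · rw [Fintype.sum_sum_type]
    simp only [Sum.elim_inl, Sum.elim_inr, Finset.sum_const, Finset.card_univ, nsmul_eq_mul,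
      Fintype.card_prod, Fintype.card_fin, Fintype.card_coe]
    have e1 : (2 : ℝ) * (2 * η) = 4 * η := by ring
    have e2 : (2 : ℝ) * (5 * ρ ^ i) = 10 * ρ ^ i := by ring
    rw [e1, e2]
    push_cast
    calc _ ≤ 1 / (N : ℝ) / 2 + 1 / (N : ℝ) / 2 := by
          refine add_le_add hη (le_trans (le_of_eq ?_) hi)
          ring
      _ = 1 / N := by ring

/-! ### Hausdorff dimension and the Baire category argument -/

lemma smallCover_term {N : ℕ} (hN : 0 < N) {d : ℝ} (hd : 0 ≤ d)
    (h : (2 * d) ^ (1 / (N : ℝ)) ≤ 1 / N) : 2 * d ≤ 1 / N := by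
  have hN1 : (1 : ℝ) ≤ N := by exact_mod_cast hN
  have h1 : (1 : ℝ) / N ≤ 1 := by rw [div_le_one (by linarith)]; exact hN1
  have h2 : 2 * d ≤ 1 := by
    by_contra! h2
    have := Real.one_lt_rpow h2 (by positivity : (0 : ℝ) < 1 / N)
    linarith
  refine le_trans ?_ h
  exact Real.self_le_rpow_of_le_one (by positivity) h2 h1

/-- The cover of order `N` bounds the Hausdorff measure of every dimension `d ≥ 1/N`, so small
covers of all large orders give dimension zero. -/
lemma dimH_zero_of_smallCover {s : Set ℝ} {N₀ : ℕ} (h : ∀ N, N₀ ≤ N → 0 < N → SmallCover N s) :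
    dimH s = 0 := by
  refine le_antisymm ?_ bot_le
  refine le_of_forall_gt_imp_ge_of_dense fun e he => ?_
  obtain ⟨d, hd0, hde⟩ := ENNReal.lt_iff_exists_nnreal_btwn.1 he
  refine le_trans ?_ hde.le
  have hd : (0 : ℝ) < d := by exact_mod_cast hd0
  apply dimH_le_of_hausdorffMeasure_ne_top
  obtain ⟨N₁, hN₁⟩ := exists_nat_gt (1 / (d : ℝ))
  have h' : ∀ n : ℕ, SmallCover (n + N₀ + N₁ + 1) s := fun n => h _ (by omega) (by omega)
  choose ι hι x r hr0 hcov hsum using h'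
  have hterm : ∀ n i, (2 * r n i) ^ (1 / ((n + N₀ + N₁ + 1 : ℕ) : ℝ)) ≤ 1 / (n + N₀ + N₁ + 1 : ℕ) :=
    fun n i => (Finset.single_le_sum (f := fun i => (2 * r n i) ^ (1 / ((n + N₀ + N₁ + 1 : ℕ) : ℝ)))
      (fun j _ => Real.rpow_nonneg (mul_nonneg two_pos.le (hr0 n j)) _)
      (Finset.mem_univ i)).trans (hsum n)
  have hdiam : ∀ n i, 2 * r n i ≤ 1 / (n + N₀ + N₁ + 1 : ℕ) := fun n i =>
    smallCover_term (by omega) (hr0 n i) (hterm n i)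
  have hed : ∀ n i, Metric.ediam (Metric.closedBall (x n i) (r n i)) = ENNReal.ofReal (2 * r n i) := by
    intro n i
    rw [Real.closedBall_eq_Icc, Real.ediam_Icc]; congr 1; ring
  have hle : ∀ n : ℕ, 1 / ((n + N₀ + N₁ + 1 : ℕ) : ℝ) ≤ 1 / ((n : ℝ) + 1) := fun n => by
    apply one_div_le_one_div_of_le (by positivity)
    push_cast; linarith [(Nat.cast_nonneg N₀ : (0 : ℝ) ≤ N₀), (Nat.cast_nonneg N₁ : (0 : ℝ) ≤ N₁)]
  have key := Measure.hausdorffMeasure_le_liminf_sum (d : ℝ) s (l := Filter.atTop)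
    (fun n : ℕ => ENNReal.ofReal (1 / ((n : ℝ) + 1)))
    (by
      have := ENNReal.tendsto_ofReal (tendsto_one_div_add_atTop_nhds_zero_nat (𝕜 := ℝ))
      rwa [ENNReal.ofReal_zero] at this)
    (fun n i => Metric.closedBall (x n i) (r n i))
    (Filter.Eventually.of_forall fun n i => by
      rw [hed]; exact ENNReal.ofReal_le_ofReal ((hdiam n i).trans (hle n)))
    (Filter.Eventually.of_forall hcov)
  refine ne_top_of_le_ne_top ENNReal.one_ne_top (key.trans ?_)
  refine (Filter.liminf_le_liminf (v := fun _ : ℕ => (1 : ENNReal))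
    (Filter.Eventually.of_forall fun n => ?_)).trans (by simp)
  have hNd : 1 / ((n + N₀ + N₁ + 1 : ℕ) : ℝ) ≤ d := by
    rw [div_le_iff₀ (by positivity)]
    rw [div_lt_iff₀ hd] at hN₁
    push_cast
    nlinarith [(Nat.cast_nonneg N₀ : (0 : ℝ) ≤ N₀), (Nat.cast_nonneg n : (0 : ℝ) ≤ n)]
  have hN1 : 1 / ((n + N₀ + N₁ + 1 : ℕ) : ℝ) ≤ 1 :=
    (hle n).trans (by rw [div_le_one (by positivity)]; linarith [(Nat.cast_nonneg n : (0 : ℝ) ≤ n)])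
  calc ∑ i, Metric.ediam (Metric.closedBall (x n i) (r n i)) ^ (d : ℝ)
      ≤ ∑ i, ENNReal.ofReal ((2 * r n i) ^ (1 / ((n + N₀ + N₁ + 1 : ℕ) : ℝ))) := by
        refine Finset.sum_le_sum fun i _ => ?_
        have h0 : 0 ≤ 2 * r n i := mul_nonneg two_pos.le (hr0 n i)
        rw [hed, ENNReal.ofReal_rpow_of_nonneg h0 hd.le]
        apply ENNReal.ofReal_le_ofReal
        exact Real.rpow_le_rpow_of_exponent_ge' h0 ((hdiam n i).trans hN1) (by positivity) hNd
    _ = ENNReal.ofReal (∑ i, (2 * r n i) ^ (1 / ((n + N₀ + N₁ + 1 : ℕ) : ℝ))) :=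
        (ENNReal.ofReal_sum_of_nonneg fun i _ =>
          Real.rpow_nonneg (mul_nonneg two_pos.le (hr0 n i)) _).symm
    _ ≤ 1 := by
        rw [ENNReal.ofReal_le_one]
        exact (hsum n).trans hN1

/-- Limit-periodic potentials whose sieved spectra have a small cover of order `N`, uniformly for
couplings with `1/N ≤ |lam| ≤ N`. -/
def goodSet (N k : ℕ) : Set LPZ := {V | ∀ lam : ℝ, 1 / (N : ℝ) ≤ |lam| → |lam| ≤ N →
  SmallCover N (SchrodingerSpectrum (sievePot lam (V : ℤ →ᵇ ℝ) k))}

/-- Potentials with a neighbourhood in `goodSet N k` are dense, by periodic approximation and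
`exists_good`. -/
lemma goodSet_dense {N k : ℕ} (hN : 0 < N) (hk : 0 < k) : Dense (interior (goodSet N k)) := by
  rw [Metric.dense_iff]
  rintro ⟨V, hV⟩ ε hε
  obtain ⟨P, ⟨q, hq, hP⟩, hVP⟩ := Metric.mem_closure_iff.1 hV (ε / 2) (half_pos hε)
  obtain ⟨Q, p, hp, hQ, hQP, r, hr, hgood⟩ := exists_good hq hk hN hP (by positivity : 0 < ε / 4)
  obtain ⟨C, hC⟩ := per_bounded hp hQ
  set Q' : ℤ →ᵇ ℝ := BoundedContinuousFunction.ofNormedAddCommGroupDiscrete Q C hC with hQ'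
  have hQLP : Q' ∈ LPZ := subset_closure ⟨p, hp, hQ⟩
  refine ⟨⟨Q', hQLP⟩, ?_, ?_⟩
  · rw [Metric.mem_ball, Subtype.dist_eq]
    have h1 : dist Q' P ≤ ε / 4 :=
      (BoundedContinuousFunction.dist_le (by positivity)).2 fun n => hQP n
    have h2 := dist_triangle Q' P V
    rw [dist_comm P V] at h2
    show dist Q' V < ε
    linarith
  · rw [mem_interior_iff_mem_nhds, Metric.mem_nhds_iff]
    refine ⟨r, hr, fun V' hV' => ?_⟩
    rw [Metric.mem_ball, Subtype.dist_eq] at hV'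
    exact fun lam h1 h2 => hgood _ (fun n => by
      have := BoundedContinuousFunction.dist_coe_le_dist (f := (V' : ℤ →ᵇ ℝ)) (g := Q') n
      rw [Real.dist_eq] at this
      exact this.trans hV'.le) lam h1 h2

/-- Sieving a limit-periodic potential keeps it limit-periodic. -/
lemma limPer_sievePot {V : ℤ →ᵇ ℝ} (hV : V ∈ LPZ) (lam : ℝ) {k : ℕ} (hk : 0 < k) :
    LimPer (sievePot lam V k) := by
  intro δ hδ
  set δ' := δ / (2 * (|lam| + 1)) with hδ'
  have hδ'0 : 0 < δ' := by positivity
  obtain ⟨P, ⟨q, hq, hP⟩, hVP⟩ := Metric.mem_closure_iff.1 hV δ' hδ'0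
  refine ⟨(k * q : ℕ), by positivity, fun j n => ?_⟩
  have hclose := sievePot_close hδ'0.le (V := V) (V' := P) (fun n => by
    have := BoundedContinuousFunction.dist_coe_le_dist (f := V) (g := P) n
    rw [Real.dist_eq] at this
    exact this.trans hVP.le) lam k
  have hper := per_mul (sievePot_per (V := P) lam hk hP) n j
  have h1 := hclose (n + j * (k * q : ℕ))
  have h2 := hclose n
  rw [hper] at h1
  rw [abs_sub_comm] at h2
  have h3 := abs_sub_le (sievePot lam V k (n + j * (k * q : ℕ))) (sievePot lam P k n)
    (sievePot lam V k n)
  have h4 : |lam| * δ' * 2 ≤ δ := by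
    rw [hδ', ← mul_div_assoc, div_mul_eq_mul_div, div_le_iff₀ (by positivity)]
    nlinarith [abs_nonneg lam]
  linarith

/-- For generic limit-periodic `V : ℤ → ℝ`, the spectrum of `H_{λ V^{[k]}}` is a
Cantor set of zero Hausdorff dimension for every `λ ≠ 0` and every `k ∈ ℕ`. -/
theorem sieve_generic_zero_dim_cantor :
    ∃ R : Set LPZ, IsGδ R ∧ Dense R ∧
      ∀ V ∈ R, ∀ lam : ℝ, lam ≠ 0 → ∀ k : ℕ, 0 < k →
        IsZeroDimCantor
          (SchrodingerSpectrum (fun n => lam * sieve (⇑(V : ℤ →ᵇ ℝ)) k n)) := by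
  -- the intersection runs over `N = a.1 + 1` and `k = a.2 + 1`
  have : CompleteSpace LPZ := isClosed_closure.completeSpace_coe
  refine ⟨⋂ a : ℕ × ℕ, interior (goodSet (a.1 + 1) (a.2 + 1)),
    IsGδ.iInter_of_isOpen fun _ => isOpen_interior,
    dense_iInter_of_isOpen (fun _ => isOpen_interior)
      fun a => goodSet_dense (Nat.succ_pos _) (Nat.succ_pos _), ?_⟩
  intro V hV lam hlam k hk
  change IsZeroDimCantor (SchrodingerSpectrum (sievePot lam (V : ℤ →ᵇ ℝ) k))
  have hb : ∀ n, |sievePot lam (V : ℤ →ᵇ ℝ) k n| ≤ |lam| * ‖(V : ℤ →ᵇ ℝ)‖ :=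
    sievePot_bound (norm_nonneg _) (fun n => (V : ℤ →ᵇ ℝ).norm_coe_le_norm n) lam k
  have hdim : dimH (SchrodingerSpectrum (sievePot lam (V : ℤ →ᵇ ℝ) k)) = 0 := by
    have hl0 : 0 < |lam| := abs_pos.2 hlam
    obtain ⟨N₀, hN₀⟩ := exists_nat_gt (max |lam| (1 / |lam|))
    refine dimH_zero_of_smallCover (N₀ := N₀) fun N hN hN0 => ?_
    have h1 := interior_subset (mem_iInter.1 hV (N - 1, k - 1))
    simp only [Nat.sub_add_cancel hN0, Nat.sub_add_cancel hk] at h1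
    have hNN : (N₀ : ℝ) ≤ N := by exact_mod_cast hN
    have hNpos : (0 : ℝ) < N := by exact_mod_cast hN0
    refine h1 lam ?_ ?_
    · rw [one_div_le hNpos hl0]
      linarith [le_max_right |lam| (1 / |lam|)]
    · linarith [le_max_left |lam| (1 / |lam|)]
  refine ⟨spectrum_nonempty hb, spectrum_compact hb,
    spectrum_preperfect hb (limPer_sievePot V.2 lam hk), ?_, hdim⟩
  by_contra hne
  have := Real.dimH_of_nonempty_interior (nonempty_iff_ne_empty.2 hne)
  rw [hdim] at this
  simp at this
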